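/- Let k ≥ 1 be a fixed integer and let K_n, P_n, p_n be scalings with K_n ≥ 2 for all sufficiently large n and K_n²/P_n = o(1). Define α_n by p_e = (ln n + (k−1)·ln ln n + α_n)/n. Assume that either there exists ε > 0 with n·p_e > ε for all sufficiently large n, or lim_{n→∞} n·p_e = 0. If lim_{n→∞} α_n = −∞, then P[𝔾_on(n,K_n,P_n,p_n) is k-connected] → 0 and P[the minimum vertex degree of 𝔾_on(n,K_n,P_n,p_n) is at least k] → 0 as n → ∞. -/

import Mathlib

open MeasureTheory Filter Asymptotics
open scoped ENNReal

noncomputable section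

/-- Key rings: `K`-element subsets of a key pool of size `P`. -/
abbrev KeyRing (P K : ℕ) : Type := {s : Finset (Fin P) // s.card = K}

instance (P K : ℕ) : MeasurableSpace (KeyRing P K) := ⊤

/-- The uniform probability measure on key rings. -/
def uniformKeyMeasure (P K : ℕ) : Measure (KeyRing P K) :=
  (Fintype.card (KeyRing P K) : ℝ≥0∞)⁻¹ • (Measure.count : Measure (KeyRing P K))

/-- The Bernoulli measure with parameter `p` on `Bool`. -/
def bern (p : ℝ) : Measure Bool :=
  ENNReal.ofReal p • Measure.dirac true + ENNReal.ofReal (1 - p) • Measure.dirac false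

/-- Sample space underlying `𝔾_on(n, K, P, p)`: independent key rings for the `n`
nodes together with independent on/off channel states for each pair of nodes. -/
abbrev GonSpace (n K P : ℕ) : Type :=
  (Fin n → KeyRing P K) × (Sym2 (Fin n) → Bool)

/-- The probability measure of the model `𝔾_on(n, K, P, p)`: the key rings of the
`n` nodes are independent and uniform, and the channels are independent
Bernoulli(`p`) variables, independent of the key rings. -/
def gonMeasure (n K P : ℕ) (p : ℝ) : Measure (GonSpace n K P) :=
  (Measure.pi fun _ : Fin n => uniformKeyMeasure P K).prod
    (Measure.pi fun _ : Sym2 (Fin n) => bern p)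

/-- The random graph `𝔾_on`: an edge is present iff the key rings intersect and the
channel between the two nodes is on. -/
def gonGraph {n K P : ℕ} (ω : GonSpace n K P) : SimpleGraph (Fin n) where
  Adj i j := i ≠ j ∧ ((ω.1 i).1 ∩ (ω.1 j).1).Nonempty ∧ ω.2 s(i, j) = true
  symm := by
    constructor
    rintro i j ⟨h1, h2, h3⟩
    exact ⟨h1.symm, by rwa [Finset.inter_comm], by rwa [Sym2.eq_swap]⟩
  loopless := ⟨fun i h => h.1 rfl⟩

/-- The random key graph `G(n, K, P)`: an edge is present iff the key rings intersect. -/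
def rkgGraph {n K P : ℕ} (ω : Fin n → KeyRing P K) : SimpleGraph (Fin n) where
  Adj i j := i ≠ j ∧ ((ω i).1 ∩ (ω j).1).Nonempty
  symm := by
    constructor
    rintro i j ⟨h1, h2⟩
    exact ⟨h1.symm, by rwa [Finset.inter_comm]⟩
  loopless := ⟨fun i h => h.1 rfl⟩

/-- The probability measure of the random key graph model. -/
def rkgMeasure (n K P : ℕ) : Measure (Fin n → KeyRing P K) :=
  Measure.pi fun _ : Fin n => uniformKeyMeasure P K

/-- Degree of a vertex. -/
def gDeg {V : Type*} (G : SimpleGraph V) (v : V) : ℕ := Nat.card {w // G.Adj v w}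

/-- Minimum vertex degree. -/
def minDeg {V : Type*} (G : SimpleGraph V) : ℕ := sInf (Set.range (gDeg G))

/-- A graph is `k`-connected if it remains connected after the removal of any
`k - 1` of its vertices. -/
def KConnected {V : Type*} (G : SimpleGraph V) (k : ℕ) : Prop :=
  ∀ S : Finset V, S.card ≤ k - 1 → (G.induce ((S : Set V)ᶜ)).Connected

/-- Vertex connectivity: the least number of vertices whose deletion disconnects
the graph. -/
def vertexConn {V : Type*} (G : SimpleGraph V) : ℕ :=
  sInf {m | ∃ S : Finset V, S.card = m ∧ ¬ (G.induce ((S : Set V)ᶜ)).Connected}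

/-- `p_s`: the probability that two key rings share at least one key. -/
def psf (K P : ℕ) : ℝ :=
  if 2 * K ≤ P then 1 - (Nat.choose (P - K) K : ℝ) / (Nat.choose P K : ℝ) else 1

/-- `p_e = p · p_s`: the probability of an edge in `𝔾_on`. -/
def pef (K P : ℕ) (p : ℝ) : ℝ := p * psf K P

/-- The event `D_{x,ℓ}` that the node with index `x` has degree exactly `ℓ`. -/
def degEvent (n K P : ℕ) (x ℓ : ℕ) : Set (GonSpace n K P) :=
  {ω | ∃ hx : x < n, gDeg (gonGraph ω) ⟨x, hx⟩ = ℓ}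

/-- The event `E_{xy}` that the edge between the nodes with indices `x`, `y` is present. -/
def edgeEvent (n K P : ℕ) (x y : ℕ) : Set (GonSpace n K P) :=
  {ω | ∃ (hx : x < n) (hy : y < n), (gonGraph ω).Adj ⟨x, hx⟩ ⟨y, hy⟩}

/-- The event that the key rings of nodes `x` and `y` share exactly `u` keys. -/
def interCardEvent (n K P : ℕ) (x y u : ℕ) : Set (GonSpace n K P) :=
  {ω | ∃ (hx : x < n) (hy : y < n), ((ω.1 ⟨x, hx⟩).1 ∩ (ω.1 ⟨y, hy⟩).1).card = u}

/-- The event `K_{xy}` that the key rings of nodes `x` and `y` share at least one key. -/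
def keyShareEvent (n K P : ℕ) (x y : ℕ) : Set (GonSpace n K P) :=
  {ω | ∃ (hx : x < n) (hy : y < n), ((ω.1 ⟨x, hx⟩).1 ∩ (ω.1 ⟨y, hy⟩).1).Nonempty}

/-- `r_n = min(⌊P/K⌋, ⌊n/2⌋)`. -/
def rn (n K P : ℕ) : ℕ := min (P / K) (n / 2)

/-- The threshold array `J`. -/
def Jarr (n K P : ℕ) (ε lam mu : ℝ) (i : ℕ) : ℕ :=
  if i ≤ rn n K P then max ⌊(1 + ε) * (K : ℝ)⌋₊ ⌊lam * (K : ℝ) * (i : ℝ)⌋₊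
  else ⌊mu * (P : ℝ)⌋₊

/-- The event `𝓔(J)`: some set `T` of at least two nodes has a union of key rings of
size at most `J_{|T|}`. -/
def EJ (n K P : ℕ) (ε lam mu : ℝ) : Set (GonSpace n K P) :=
  {ω | ∃ T : Finset (Fin n), 2 ≤ T.card ∧
    (T.biUnion fun i => (ω.1 i).1).card ≤ Jarr n K P ε lam mu T.card}

instance (P K : ℕ) : DiscreteMeasurableSpace (KeyRing P K) := ⟨fun _ => trivial⟩

theorem card_keyRing (P K : ℕ) : Fintype.card (KeyRing P K) = P.choose K := by
  simp

theorem isProbabilityMeasure_uniformKeyMeasure {P K : ℕ} (h : K ≤ P) :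
    IsProbabilityMeasure (uniformKeyMeasure P K) := by
  constructor
  have hc : Fintype.card (KeyRing P K) ≠ 0 := by
    rw [card_keyRing]
    exact (Nat.choose_pos h).ne'
  rw [uniformKeyMeasure, Measure.smul_apply, Measure.count_univ, smul_eq_mul,
    ENat.card_eq_coe_fintype_card]
  exact ENNReal.inv_mul_cancel (by simpa using hc) (by simp)

theorem uniformKeyMeasure_real {P K : ℕ} (E : Set (KeyRing P K)) :
    (uniformKeyMeasure P K).real E = (Nat.card E : ℝ) / (P.choose K : ℝ) := by
  classical
  rw [measureReal_def, uniformKeyMeasure, Measure.smul_apply, Measure.count_apply .of_discrete,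
    card_keyRing, smul_eq_mul, ENNReal.toReal_mul, ENNReal.toReal_inv, Set.encard_eq_coe_toFinset_card]
  simp [div_eq_inv_mul, Set.toFinset_card]

theorem isProbabilityMeasure_bern {p : ℝ} (h0 : 0 ≤ p) (h1 : p ≤ 1) :
    IsProbabilityMeasure (bern p) := by
  constructor
  simp only [bern, Measure.add_apply, Measure.smul_apply, measure_univ, smul_eq_mul, mul_one]
  rw [← ENNReal.ofReal_add h0 (by linarith)]
  simp

theorem bern_real_true {p : ℝ} (h0 : 0 ≤ p) : (bern p).real {true} = p := by
  simp [measureReal_def, bern, h0]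

/-- A cylinder indexed along an injection has the product of the marginal probabilities. -/
theorem pi_setOf_comp_eq {ι κ X : Type*} [Fintype ι] [Fintype κ] [MeasurableSpace X]
    (μ : Measure X) [IsProbabilityMeasure μ] {φ : ι → κ} (hφ : Function.Injective φ)
    (d : ι → X) :
    (Measure.pi fun _ : κ => μ) {C | ∀ i, C (φ i) = d i} = ∏ i, μ {d i} := by
  classical
  have hset : {C : κ → X | ∀ i, C (φ i) = d i} =
      Set.pi Set.univ fun e => {b | ∀ i, φ i = e → b = d i} := by
    ext C
    simp only [Set.mem_ofPred_eq, Set.mem_pi, Set.mem_univ, true_implies]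
    constructor
    · rintro h e i rfl
      exact h i
    · intro h i
      exact h _ i rfl
  rw [hset, Measure.pi_pi]
  have himg : ∏ i, μ {d i} = ∏ e ∈ Finset.univ.image φ, μ {b | ∀ i, φ i = e → b = d i} := by
    rw [Finset.prod_image fun a _ b _ h => hφ h]
    refine Finset.prod_congr rfl fun i _ => congrArg μ ?_
    ext b
    simp only [Set.mem_singleton_iff, Set.mem_ofPred_eq]
    constructor
    · rintro rfl j hj
      rw [hφ hj]
    · exact fun h => h i rfl
  rw [himg]
  symm
  refine Finset.prod_subset (Finset.subset_univ _) fun e _ he => ?_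
  have : {b : X | ∀ i, φ i = e → b = d i} = Set.univ := by
    ext b
    simp only [Set.mem_ofPred_eq, Set.mem_univ, iff_true]
    intro i hi
    exact absurd (Finset.mem_image.2 ⟨i, Finset.mem_univ _, hi⟩) he
  rw [this, measure_univ]

/-- The vertices outside the range of a family of roots. -/
abbrev NonRoot {n : ℕ} {R : Type} (ρ : R → Fin n) : Type := {z : Fin n // z ∉ Set.range ρ}

/-- The key rings of the roots, and for every other vertex its key ring together with its
channels to the roots. -/
def exploreRoots {n K P : ℕ} {R : Type} (ρ : R → Fin n) (ω : GonSpace n K P) :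
    (R → KeyRing P K) × (NonRoot ρ → KeyRing P K × (R → Bool)) :=
  (fun r => ω.1 (ρ r), fun z => (ω.1 z, fun r => ω.2 s(ρ r, (z : Fin n))))

/-- The law of the data seen by one non-root vertex. -/
def nonRootLaw (P K : ℕ) (p : ℝ) (R : Type) [Fintype R] :
    Measure (KeyRing P K × (R → Bool)) :=
  (uniformKeyMeasure P K).prod (Measure.pi fun _ : R => bern p)

theorem isProbabilityMeasure_nonRootLaw {K P : ℕ} {p : ℝ} {R : Type} [Fintype R] (hK : K ≤ P)
    (h0 : 0 ≤ p) (h1 : p ≤ 1) : IsProbabilityMeasure (nonRootLaw P K p R) := by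
  have := isProbabilityMeasure_uniformKeyMeasure hK
  have := isProbabilityMeasure_bern h0 h1
  unfold nonRootLaw
  infer_instance

theorem isProbabilityMeasure_gonMeasure {n K P : ℕ} {p : ℝ} (hK : K ≤ P)
    (h0 : 0 ≤ p) (h1 : p ≤ 1) : IsProbabilityMeasure (gonMeasure n K P p) := by
  have := isProbabilityMeasure_uniformKeyMeasure hK
  have := isProbabilityMeasure_bern h0 h1
  unfold gonMeasure
  infer_instance

open Classical in
/-- Given the key rings of the roots, the data of the other vertices are independent. -/
theorem map_exploreRoots {n K P : ℕ} {p : ℝ} (hK : K ≤ P) (h0 : 0 ≤ p) (h1 : p ≤ 1)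
    {R : Type} [Fintype R] {ρ : R → Fin n} (hρ : Function.Injective ρ) :
    (gonMeasure n K P p).map (exploreRoots ρ) =
      (Measure.pi fun _ : R => uniformKeyMeasure P K).prod
        (Measure.pi fun _ : NonRoot ρ => nonRootLaw P K p R) := by
  have := isProbabilityMeasure_uniformKeyMeasure hK
  have := isProbabilityMeasure_bern h0 h1
  have := isProbabilityMeasure_nonRootLaw (R := R) hK h0 h1
  refine Measure.ext_of_singleton fun ⟨A, d⟩ => ?_
  rw [Measure.map_apply .of_discrete (measurableSet_singleton _)]
  have hpre : (exploreRoots ρ : GonSpace n K P → _) ⁻¹' {(A, d)} =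
      {S | ∀ i : R ⊕ NonRoot ρ, S (Sum.elim ρ Subtype.val i) = Sum.elim A (fun z => (d z).1) i} ×ˢ
        {C | ∀ i : R × NonRoot ρ, C s(ρ i.1, (i.2 : Fin n)) = (d i.2).2 i.1} := by
    ext ω
    simp only [exploreRoots, Set.mem_preimage, Set.mem_singleton_iff, funext_iff,
      Set.mem_prod, Set.mem_ofPred_eq, Sum.forall, Sum.elim_inl, Sum.elim_inr, Prod.forall,
      Prod.ext_iff]
    constructor
    · rintro ⟨h1, h2⟩
      exact ⟨⟨h1, fun z => (h2 z).1⟩, fun r z => (h2 z).2 r⟩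
    · rintro ⟨⟨h1, h2⟩, h3⟩
      exact ⟨h1, fun z => ⟨h2 z, fun r => h3 r z⟩⟩
  have hφ : Function.Injective (Sum.elim ρ Subtype.val : R ⊕ NonRoot ρ → Fin n) := by
    refine hρ.sumElim Subtype.val_injective fun r z h => z.2 ⟨r, h⟩
  have hψ : Function.Injective (fun i : R × NonRoot ρ => s(ρ i.1, (i.2 : Fin n))) := by
    rintro ⟨r, z⟩ ⟨r', z'⟩ h
    rcases Sym2.eq_iff.1 h with ⟨h1, h2⟩ | ⟨h1, h2⟩
    · exact Prod.ext (hρ h1) (Subtype.ext h2)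
    · exact absurd ⟨r, h1⟩ z'.2
  rw [hpre, gonMeasure, Measure.prod_prod, pi_setOf_comp_eq _ hφ, pi_setOf_comp_eq _ hψ,
    ← Set.singleton_prod_singleton, Measure.prod_prod, Measure.pi_singleton, Measure.pi_singleton,
    Fintype.prod_sum_type, Fintype.prod_prod_type_right, mul_assoc, ← Finset.prod_mul_distrib]
  congr 1
  refine Finset.prod_congr rfl fun z _ => ?_
  rw [nonRootLaw, ← Prod.mk.eta (p := d z), ← Set.singleton_prod_singleton, Measure.prod_prod,
    Measure.pi_singleton]
  rfl

/-- The partial binomial sum with weights `a` for failure and `b` for success. -/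
def binSum (a b : ℝ) (N k : ℕ) : ℝ :=
  ∑ j ∈ Finset.range k, (N.choose j : ℝ) * (b ^ j * a ^ (N - j))

open Classical in
theorem sum_prod_filter_card_lt {Z : Type*} [Fintype Z] (W : Bool → ℝ) (k : ℕ) :
    ∑ c : Z → Bool with Nat.card {z // c z = true} < k, ∏ z, W (c z) =
      binSum (W false) (W true) (Fintype.card Z) k := by
  have h1 : ∑ c : Z → Bool with Nat.card {z // c z = true} < k, ∏ z, W (c z) =
      ∑ I : Finset Z, if I.card < k then
        W true ^ I.card * W false ^ (Fintype.card Z - I.card) else 0 := by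
    rw [Finset.sum_filter]
    refine Finset.sum_bij' (fun c _ => Finset.univ.filter fun z => c z = true)
      (fun I _ => fun z => decide (z ∈ I)) (by simp) (by simp) (by simp) (by simp) ?_
    intro c _
    have hc : Nat.card {z // c z = true} = (Finset.univ.filter fun z => c z = true).card := by
      simp [Fintype.card_subtype]
    rw [hc]
    refine if_congr Iff.rfl ?_ rfl
    rw [← Finset.prod_filter_mul_prod_filter_not Finset.univ fun z => c z = true]
    congr 1
    · rw [← Finset.prod_const]
      exact Finset.prod_congr rfl fun z hz => by rw [(Finset.mem_filter.1 hz).2]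
    · rw [← Finset.card_compl, ← Finset.prod_const, Finset.compl_filter]
      refine Finset.prod_congr rfl fun z hz => ?_
      rw [Bool.eq_false_iff.2 (Finset.mem_filter.1 hz).2]
  rw [h1, ← Finset.powerset_univ, Finset.sum_powerset_apply_card
    fun j => if j < k then W true ^ j * W false ^ (Fintype.card Z - j) else 0, binSum]
  simp only [Finset.card_univ, nsmul_eq_mul, mul_ite, mul_zero]
  rw [← Finset.sum_filter]
  refine Finset.sum_subset_zero_on_sdiff (fun j hj => by simp_all) (fun j hj => ?_)
    fun _ _ => rfl
  simp only [Finset.mem_sdiff, Finset.mem_range, Finset.mem_filter, not_and, not_lt] at hj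
  rw [Nat.choose_eq_zero_of_lt (by by_contra! h; have := hj.2 (by omega); omega)]
  simp

open Classical in
theorem pi_real_eq_sum {Z X : Type*} [Fintype Z] [Fintype X] [MeasurableSpace X]
    [MeasurableSingletonClass X] (ν : Measure X) [IsProbabilityMeasure ν] (E : Set (Z → X)) :
    (Measure.pi fun _ : Z => ν).real E = ∑ c with c ∈ E, ∏ z, ν.real {c z} := by
  have hE : E = ((Finset.univ.filter fun c => c ∈ E : Finset (Z → X)) : Set (Z → X)) := by
    ext
    simp
  conv_lhs => rw [hE]
  rw [← sum_measureReal_singleton]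
  refine Finset.sum_congr rfl fun c _ => ?_
  rw [measureReal_def, Measure.pi_singleton, ENNReal.toReal_prod]
  rfl

open Classical in
/-- The number of successes in independent trials has the binomial distribution. -/
theorem pi_real_card_lt {Z T : Type*} [Fintype Z] [MeasurableSpace T]
    (ν : Measure T) [IsProbabilityMeasure ν] {Q : Set T} (hQ : MeasurableSet Q) (k : ℕ) :
    (Measure.pi fun _ : Z => ν).real {t | Nat.card {z // t z ∈ Q} < k} =
      binSum (1 - ν.real Q) (ν.real Q) (Fintype.card Z) k := by
  let f : T → Bool := fun t => decide (t ∈ Q)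
  have hf : Measurable f := measurable_to_bool (by simpa [f, Set.preimage] using hQ)
  have hpi : (Measure.pi fun _ : Z => ν).map (fun t z => f (t z)) =
      Measure.pi fun _ : Z => ν.map f := by
    have := Measure.isProbabilityMeasure_map (μ := ν) hf.aemeasurable
    exact Measure.pi_map_pi fun _ => hf.aemeasurable
  have := Measure.isProbabilityMeasure_map (μ := ν) hf.aemeasurable
  have hset : {t : Z → T | Nat.card {z // t z ∈ Q} < k} =
      (fun t z => f (t z)) ⁻¹' {c : Z → Bool | Nat.card {z // c z = true} < k} := by
    ext t
    simp [f]
  have hmeas : Measurable fun (t : Z → T) z => f (t z) := by fun_prop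
  rw [hset, ← map_measureReal_apply hmeas .of_discrete, hpi, pi_real_eq_sum]
  have h1 : (ν.map f).real {true} = ν.real Q := by
    rw [map_measureReal_apply hf .of_discrete]
    congr 1
    ext
    simp [f]
  have h0 : (ν.map f).real {false} = 1 - ν.real Q := by
    rw [map_measureReal_apply hf .of_discrete, ← probReal_compl_eq_one_sub hQ]
    congr 1
    ext
    simp [f]
  have := sum_prod_filter_card_lt (Z := Z) (fun b => (ν.map f).real {b}) k
  simpa [h1, h0] using this

theorem binSum_div_le {q : ℝ} (h0 : 0 ≤ q) (h1 : q < 1) (N k : ℕ) :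
    binSum (1 - q) (q / (1 - q)) N k ≤ ((1 - q)⁻¹) ^ k * binSum (1 - q) q N k := by
  have hq : 0 < 1 - q := by linarith
  rw [binSum, binSum, Finset.mul_sum]
  refine Finset.sum_le_sum fun j hj => ?_
  have hj : j ≤ k := (Finset.mem_range.1 hj).le
  have h2 : ((1 - q)⁻¹) ^ j ≤ ((1 - q)⁻¹) ^ k :=
    pow_le_pow_right₀ ((one_le_inv₀ hq).2 (by linarith)) hj
  calc (N.choose j : ℝ) * ((q / (1 - q)) ^ j * (1 - q) ^ (N - j))
      = ((1 - q)⁻¹) ^ j * ((N.choose j : ℝ) * (q ^ j * (1 - q) ^ (N - j))) := by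
        rw [div_eq_mul_inv, mul_pow]; ring
    _ ≤ _ := by gcongr

open Classical in
/-- For two nonpositively correlated events in independent trials, the probability that both
occur fewer than `k` times is almost at most the product of the two probabilities. -/
theorem pi_real_card_lt_and_card_lt_le {Z T : Type*} [Fintype Z] [MeasurableSpace T]
    (ν : Measure T) [IsProbabilityMeasure ν] {Q₁ Q₂ : Set T} (hQ₁ : MeasurableSet Q₁)
    (hQ₂ : MeasurableSet Q₂) {q : ℝ} (hq : q < 1) (h₁ : ν.real Q₁ = q) (h₂ : ν.real Q₂ = q)
    (h₁₂ : ν.real (Q₁ ∩ Q₂) ≤ q ^ 2) (k : ℕ) :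
    (Measure.pi fun _ : Z => ν).real
        {t | Nat.card {z // t z ∈ Q₁} < k ∧ Nat.card {z // t z ∈ Q₂} < k} ≤
      (((1 - q)⁻¹) ^ k * binSum (1 - q) q (Fintype.card Z) k) ^ 2 := by
  have hq0 : 0 ≤ q := h₁ ▸ measureReal_nonneg
  have hq1 : 0 < 1 - q := by linarith
  let f : T → Bool × Bool := fun t => (decide (t ∈ Q₁), decide (t ∈ Q₂))
  have hf : Measurable f :=
    (measurable_to_bool (by simpa [Set.preimage] using hQ₁)).prodMk
      (measurable_to_bool (by simpa [Set.preimage] using hQ₂))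
  have := Measure.isProbabilityMeasure_map (μ := ν) hf.aemeasurable
  have hpi : (Measure.pi fun _ : Z => ν).map (fun t z => f (t z)) =
      Measure.pi fun _ : Z => ν.map f := Measure.pi_map_pi fun _ => hf.aemeasurable
  have hset : {t : Z → T | Nat.card {z // t z ∈ Q₁} < k ∧ Nat.card {z // t z ∈ Q₂} < k} =
      (fun t z => f (t z)) ⁻¹' {c : Z → Bool × Bool |
        Nat.card {z // (c z).1 = true} < k ∧ Nat.card {z // (c z).2 = true} < k} := by
    ext t
    simp [f]
  have hmeas : Measurable fun (t : Z → T) z => f (t z) := by fun_prop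
  let W : Bool → ℝ := fun b => if b then q / (1 - q) else 1 - q
  have hW : ∀ b, 0 ≤ W b := by
    intro b
    simp only [W]
    split_ifs <;> positivity
  have hqq : q ≤ q / (1 - q) := by
    rw [le_div_iff₀ hq1]
    nlinarith
  have hw : ∀ x : Bool × Bool, (ν.map f).real {x} ≤ W x.1 * W x.2 := by
    rintro ⟨b₁, b₂⟩
    rw [map_measureReal_apply hf .of_discrete]
    have hcancel : q / (1 - q) * (1 - q) = q := div_mul_cancel₀ _ hq1.ne'
    rcases b₁ <;> rcases b₂ <;> simp only [W, if_true, if_false, Bool.false_eq_true]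
    · have e : f ⁻¹' {(false, false)} = (Q₁ ∪ Q₂)ᶜ := by
        ext; simp [f]
      have hu := measureReal_union_add_inter (μ := ν) (s := Q₁) hQ₂
      rw [e, probReal_compl_eq_one_sub (hQ₁.union hQ₂)]
      nlinarith
    · have e : f ⁻¹' {(false, true)} ⊆ Q₂ := fun t => by simp [f]
      rw [mul_comm, hcancel, ← h₂]
      exact measureReal_mono e
    · have e : f ⁻¹' {(true, false)} ⊆ Q₁ := fun t => by simp +contextual [f]
      rw [hcancel, ← h₁]
      exact measureReal_mono e
    · have e : f ⁻¹' {(true, true)} = Q₁ ∩ Q₂ := by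
        ext; simp [f]
      rw [e]
      exact h₁₂.trans (by rw [sq]; gcongr)
  rw [hset, ← map_measureReal_apply hmeas .of_discrete, hpi, pi_real_eq_sum]
  refine (Finset.sum_le_sum fun c _ =>
    Finset.prod_le_prod (fun _ _ => measureReal_nonneg) fun z _ => hw (c z)).trans ?_
  have hsq := sq (∑ c : Z → Bool with Nat.card {z // c z = true} < k, ∏ z, W (c z))
  rw [Finset.sum_mul_sum, ← Finset.sum_product'] at hsq
  have hb : 0 ≤ binSum (1 - q) (q / (1 - q)) (Fintype.card Z) k :=
    Finset.sum_nonneg fun j _ => by positivity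
  refine le_trans (le_of_eq ?_) (pow_le_pow_left₀ hb (binSum_div_le hq0 hq (Fintype.card Z) k) 2)
  have hsum := sum_prod_filter_card_lt (Z := Z) W k
  simp only [W, if_true, if_false, Bool.false_eq_true] at hsum
  rw [← hsum, hsq]
  refine Finset.sum_equiv (Equiv.arrowProdEquivProdArrow Z (fun _ => Bool) fun _ => Bool) ?_ ?_
  · intro c
    simp [Equiv.arrowProdEquivProdArrow]
  · intro c _
    simp [Equiv.arrowProdEquivProdArrow, Finset.prod_mul_distrib]

/-- The probability that a uniform `K`-subset of a `P`-set misses a given `a`-subset. -/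
def missProb (P K a : ℕ) : ℝ := ((P - a).choose K : ℝ) / (P.choose K : ℝ)

theorem descFactorial_sub_mul_le (P a b : ℕ) : ∀ j : ℕ,
    (P - (a + b)).descFactorial j * P.descFactorial j ≤
      (P - a).descFactorial j * (P - b).descFactorial j
  | 0 => by simp
  | j + 1 => by
    have h : (P - (a + b) - j) * (P - j) ≤ (P - a - j) * (P - b - j) := by
      rcases Nat.lt_or_ge P (a + b + j) with h | h
      · rw [show P - (a + b) - j = 0 by omega]
        simp
      · obtain ⟨c, rfl⟩ := Nat.exists_eq_add_of_le h
        rw [show a + b + j + c - (a + b) - j = c by omega,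
          show a + b + j + c - j = a + b + c by omega,
          show a + b + j + c - a - j = b + c by omega,
          show a + b + j + c - b - j = a + c by omega]
        nlinarith [Nat.zero_le (a * b)]
    have := Nat.mul_le_mul h (descFactorial_sub_mul_le P a b j)
    simp only [Nat.descFactorial_succ]
    calc _ = (P - (a + b) - j) * (P - j) *
          ((P - (a + b)).descFactorial j * P.descFactorial j) := by ring
      _ ≤ _ := this
      _ = _ := by ring

theorem missProb_add_le {P K : ℕ} (hK : K ≤ P) (a b : ℕ) :
    missProb P K (a + b) ≤ missProb P K a * missProb P K b := by
  have hpos : (0 : ℝ) < P.choose K := by exact_mod_cast Nat.choose_pos hK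
  have h := descFactorial_sub_mul_le P a b K
  simp only [Nat.descFactorial_eq_factorial_mul_choose] at h
  have h2 : (P - (a + b)).choose K * P.choose K ≤ (P - a).choose K * (P - b).choose K := by
    refine le_of_mul_le_mul_left (a := K.factorial * K.factorial) ?_ (Nat.mul_pos K.factorial_pos K.factorial_pos)
    calc _ = _ := by ring
      _ ≤ _ := h
      _ = _ := by ring
  have h3 : ((P - (a + b)).choose K : ℝ) * P.choose K ≤ (P - a).choose K * (P - b).choose K := by
    exact_mod_cast h2
  rw [missProb, missProb, missProb, div_mul_div_comm, div_le_div_iff₀ hpos (by positivity)]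
  nlinarith

theorem missProb_one {P K : ℕ} (hP : 0 < P) (hK : K ≤ P) :
    missProb P K 1 = 1 - (K : ℝ) / P := by
  obtain ⟨N, rfl⟩ : ∃ N, P = N + 1 := ⟨P - 1, by omega⟩
  have hpos : (0 : ℝ) < (N + 1).choose K := by exact_mod_cast Nat.choose_pos hK
  have h := Nat.choose_mul_succ_eq N K
  have h' : (N.choose K : ℝ) * (N + 1) = (N + 1).choose K * ((N + 1 : ℝ) - K) := by
    have := congrArg (Nat.cast (R := ℝ)) h
    push_cast [Nat.cast_sub hK] at this
    linarith
  rw [missProb, Nat.add_sub_cancel]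
  push_cast
  field_simp
  linarith

theorem missProb_nonneg (P K a : ℕ) : 0 ≤ missProb P K a := by
  unfold missProb
  positivity

theorem missProb_le_one (P K a : ℕ) : missProb P K a ≤ 1 := by
  refine div_le_one_of_le₀ ?_ (by positivity)
  exact_mod_cast Nat.choose_le_choose K (Nat.sub_le P a)

theorem missProb_le_pow {P K : ℕ} (hP : 0 < P) (hK : K ≤ P) (a : ℕ) :
    missProb P K a ≤ (1 - (K : ℝ) / P) ^ a := by
  induction a with
  | zero => simpa using missProb_le_one P K 0
  | succ a ih =>
    rw [pow_succ, ← missProb_one hP hK]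
    rw [← missProb_one hP hK] at ih
    exact (missProb_add_le hK a 1).trans
      (mul_le_mul_of_nonneg_right ih (missProb_nonneg P K 1))

theorem psf_eq {P K : ℕ} : psf K P = 1 - missProb P K K := by
  unfold psf missProb
  split_ifs with h
  · rfl
  · rw [Nat.choose_eq_zero_of_lt (by omega : P - K < K)]
    simp

theorem psf_nonneg {P K : ℕ} : 0 ≤ psf K P := by
  rw [psf_eq]
  linarith [missProb_le_one P K K]

theorem sq_div_le_psf {P K : ℕ} (hK0 : 0 < K) (hK : K ≤ P) :
    (K : ℝ) ^ 2 / P ≤ (1 + (K : ℝ) ^ 2 / P) * psf K P := by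
  have hP : 0 < P := by omega
  have hP' : (0 : ℝ) < P := by exact_mod_cast hP
  set s : ℝ := (K : ℝ) ^ 2 / P with hs
  have hs0 : 0 ≤ s := by positivity
  have h1 : (1 - (K : ℝ) / P) ≤ Real.exp (-((K : ℝ) / P)) := by
    have := Real.add_one_le_exp (-((K : ℝ) / P))
    linarith
  have h0 : 0 ≤ 1 - (K : ℝ) / P := by
    rw [sub_nonneg, div_le_one hP']
    exact_mod_cast hK
  have h2 : missProb P K K ≤ Real.exp (-s) := by
    refine (missProb_le_pow hP hK K).trans ((pow_le_pow_left₀ h0 h1 K).trans (le_of_eq ?_))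
    rw [← Real.exp_nat_mul, hs]
    congr 1
    field_simp
  have h3 : (1 + s) * Real.exp (-s) ≤ 1 := by
    rw [Real.exp_neg]
    have := Real.add_one_le_exp s
    rw [← div_eq_mul_inv, div_le_one (Real.exp_pos _)]
    linarith
  rw [psf_eq]
  nlinarith

theorem uniformKeyMeasure_real_disjoint {P K : ℕ} (A : Finset (Fin P)) :
    (uniformKeyMeasure P K).real {B | Disjoint A B.1} = missProb P K A.card := by
  classical
  have h : Nat.card {B : KeyRing P K | Disjoint A B.1} = (P - A.card).choose K := by
    have e : {B : KeyRing P K | Disjoint A B.1} ≃ Finset.powersetCard K Aᶜ :=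
      { toFun := fun B => ⟨B.1.1, Finset.mem_powersetCard.2
          ⟨fun x hx => Finset.mem_compl.2 fun hA => Finset.disjoint_left.1 B.2 hA hx, B.1.2⟩⟩
        invFun := fun B => ⟨⟨B.1, (Finset.mem_powersetCard.1 B.2).2⟩,
          Finset.disjoint_left.2 fun x hA hx =>
            Finset.mem_compl.1 ((Finset.mem_powersetCard.1 B.2).1 hx) hA⟩
        left_inv := fun _ => rfl
        right_inv := fun _ => rfl }
    rw [Nat.card_congr e, Nat.card_eq_fintype_card, Fintype.card_coe, Finset.card_powersetCard,
      Finset.card_compl, Fintype.card_fin]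
  rw [uniformKeyMeasure_real, h, missProb]

theorem uniformKeyMeasure_real_meet {P K : ℕ} (hK : K ≤ P) (A : Finset (Fin P)) :
    (uniformKeyMeasure P K).real {B | (A ∩ B.1).Nonempty} = 1 - missProb P K A.card := by
  have := isProbabilityMeasure_uniformKeyMeasure hK
  rw [← uniformKeyMeasure_real_disjoint, ← probReal_compl_eq_one_sub .of_discrete]
  congr 1
  ext B
  simp [Finset.disjoint_iff_inter_eq_empty, Finset.nonempty_iff_ne_empty]

theorem uniformKeyMeasure_real_meet_keyRing {P K : ℕ} (hK : K ≤ P)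
    (A : KeyRing P K) :
    (uniformKeyMeasure P K).real {B | (A.1 ∩ B.1).Nonempty} = psf K P := by
  rw [uniformKeyMeasure_real_meet hK, A.2, psf_eq]

/-- Meeting two disjoint sets is negatively correlated. -/
theorem uniformKeyMeasure_real_meet_and_meet_le {P K : ℕ} (hK : K ≤ P) {A A' : Finset (Fin P)}
    (hA : Disjoint A A') :
    (uniformKeyMeasure P K).real {B | (A ∩ B.1).Nonempty ∧ (A' ∩ B.1).Nonempty} ≤
      (1 - missProb P K A.card) * (1 - missProb P K A'.card) := by
  classical
  have := isProbabilityMeasure_uniformKeyMeasure hK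
  have hu := measureReal_union_add_inter (μ := uniformKeyMeasure P K)
    (s := {B | (A ∩ B.1).Nonempty}) (t := {B | (A' ∩ B.1).Nonempty}) .of_discrete
  have e : {B : KeyRing P K | (A ∩ B.1).Nonempty} ∪ {B | (A' ∩ B.1).Nonempty} =
      {B | ((A ∪ A') ∩ B.1).Nonempty} := by
    ext B
    simp [Finset.union_inter_distrib_right, Finset.union_nonempty]
  rw [e, uniformKeyMeasure_real_meet hK, uniformKeyMeasure_real_meet hK,
    uniformKeyMeasure_real_meet hK, Finset.card_union_of_disjoint hA] at hu
  have h := missProb_add_le hK A.card A'.card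
  change (uniformKeyMeasure P K).real ({B | (A ∩ B.1).Nonempty} ∩ {B | (A' ∩ B.1).Nonempty}) ≤ _
  nlinarith

theorem uniformKeyMeasure_real_mem {P K : ℕ} (hK : K ≤ P) (c : Fin P) :
    (uniformKeyMeasure P K).real {B | c ∈ B.1} = (K : ℝ) / P := by
  have hP : 0 < P := c.pos
  have h := uniformKeyMeasure_real_meet hK {c}
  rw [Finset.card_singleton, missProb_one hP hK] at h
  rw [← sub_sub_cancel 1 ((K : ℝ) / P), ← h]
  congr 1
  ext B
  by_cases hc : c ∈ B.1 <;> simp [hc]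

theorem uniformKeyMeasure_real_mem_and_mem_le {P K : ℕ} (hK : K ≤ P) {c d : Fin P} (h : c ≠ d) :
    (uniformKeyMeasure P K).real {B | c ∈ B.1 ∧ d ∈ B.1} ≤ ((K : ℝ) / P) ^ 2 := by
  have hP : 0 < P := c.pos
  have h := uniformKeyMeasure_real_meet_and_meet_le hK (Finset.disjoint_singleton.2 h)
  rw [Finset.card_singleton, Finset.card_singleton, missProb_one hP hK, sub_sub_cancel, ← sq] at h
  refine (le_of_eq ?_).trans h
  congr 1
  ext B
  by_cases hc : c ∈ B.1 <;> by_cases hd : d ∈ B.1 <;> simp [hc, hd]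

theorem uniformKeyMeasure_real_pairs_le {P K : ℕ} (hK : K ≤ P) (A A' : KeyRing P K) :
    (uniformKeyMeasure P K).real {B | ∃ c ∈ A.1, ∃ d ∈ A'.1, c ≠ d ∧ c ∈ B.1 ∧ d ∈ B.1} ≤
      ((K : ℝ) ^ 2 / P) ^ 2 := by
  classical
  have := isProbabilityMeasure_uniformKeyMeasure hK
  have hsub : {B : KeyRing P K | ∃ c ∈ A.1, ∃ d ∈ A'.1, c ≠ d ∧ c ∈ B.1 ∧ d ∈ B.1} ⊆
      ⋃ x ∈ (A.1 ×ˢ A'.1).filter fun x => x.1 ≠ x.2, {B | x.1 ∈ B.1 ∧ x.2 ∈ B.1} := by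
    rintro B ⟨c, hc, d, hd, hcd, h⟩
    exact Set.mem_biUnion (x := (c, d)) (by simp [hc, hd, hcd]) h
  refine (measureReal_mono hsub (measure_ne_top _ _)).trans ((measureReal_biUnion_finset_le _ _).trans ?_)
  refine (Finset.sum_le_card_nsmul _ _ (((K : ℝ) / P) ^ 2) fun x hx =>
    uniformKeyMeasure_real_mem_and_mem_le hK (Finset.mem_filter.1 hx).2).trans ?_
  have hcard : (((A.1 ×ˢ A'.1).filter fun x => x.1 ≠ x.2).card : ℝ) ≤ (K : ℝ) * K := by
    refine (Nat.cast_le.2 (Finset.card_filter_le _ _)).trans ?_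
    rw [Finset.card_product, A.2, A'.2]
    push_cast
    rfl
  rw [nsmul_eq_mul]
  refine (mul_le_mul_of_nonneg_right hcard (by positivity)).trans (le_of_eq ?_)
  ring

theorem uniformKeyMeasure_real_two_le_card_inter_le {P K : ℕ} (hK : K ≤ P) (A : KeyRing P K) :
    (uniformKeyMeasure P K).real {B | 2 ≤ (A.1 ∩ B.1).card} ≤ ((K : ℝ) ^ 2 / P) ^ 2 := by
  have := isProbabilityMeasure_uniformKeyMeasure hK
  refine (measureReal_mono ?_).trans (uniformKeyMeasure_real_pairs_le hK A A)
  intro B (hB : 2 ≤ (A.1 ∩ B.1).card)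
  obtain ⟨c, hc, d, hd, hcd⟩ := Finset.one_lt_card.1 (by omega : 1 < (A.1 ∩ B.1).card)
  rw [Finset.mem_inter] at hc hd
  exact ⟨c, hc.1, d, hd.1, hcd, hc.2, hd.2⟩

theorem uniformKeyMeasure_real_meet_and_meet_le_of_card_inter_le_one {P K : ℕ} (hK : K ≤ P)
    {A A' : KeyRing P K} (h : (A.1 ∩ A'.1).card ≤ 1) :
    (uniformKeyMeasure P K).real {B | (A.1 ∩ B.1).Nonempty ∧ (A'.1 ∩ B.1).Nonempty} ≤
      (K : ℝ) / P + ((K : ℝ) ^ 2 / P) ^ 2 := by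
  classical
  have := isProbabilityMeasure_uniformKeyMeasure hK
  have hsub : {B : KeyRing P K | (A.1 ∩ B.1).Nonempty ∧ (A'.1 ∩ B.1).Nonempty} ⊆
      (⋃ c ∈ A.1 ∩ A'.1, {B | c ∈ B.1}) ∪
        {B | ∃ c ∈ A.1, ∃ d ∈ A'.1, c ≠ d ∧ c ∈ B.1 ∧ d ∈ B.1} := by
    rintro B ⟨⟨c, hc⟩, d, hd⟩
    rw [Finset.mem_inter] at hc hd
    by_cases hcd : c = d
    · subst hcd
      exact Or.inl (Set.mem_biUnion (x := c) (Finset.mem_inter.2 ⟨hc.1, hd.1⟩) hc.2)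
    · exact Or.inr ⟨c, hc.1, d, hd.1, hcd, hc.2, hd.2⟩
  refine (measureReal_mono hsub).trans ((measureReal_union_le _ _).trans ?_)
  refine add_le_add ?_ (uniformKeyMeasure_real_pairs_le hK A A')
  refine (measureReal_biUnion_finset_le _ _).trans ?_
  refine (Finset.sum_le_card_nsmul _ _ ((K : ℝ) / P) fun c _ =>
    (uniformKeyMeasure_real_mem hK c).le).trans ?_
  rw [nsmul_eq_mul]
  refine mul_le_of_le_one_left (by positivity) ?_
  exact_mod_cast h

theorem psf_le_sq_div {P K : ℕ} (hK : K ≤ P) : psf K P ≤ (K : ℝ) ^ 2 / P := by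
  classical
  have := isProbabilityMeasure_uniformKeyMeasure hK
  obtain ⟨s, hs⟩ := Finset.exists_subset_card_eq (s := (Finset.univ : Finset (Fin P))) (n := K)
    (by simpa using hK)
  rw [← uniformKeyMeasure_real_meet_keyRing hK ⟨s, hs.2⟩]
  have hsub : {B : KeyRing P K | (s ∩ B.1).Nonempty} ⊆ ⋃ c ∈ s, {B | c ∈ B.1} := by
    rintro B ⟨c, hc⟩
    rw [Finset.mem_inter] at hc
    exact Set.mem_biUnion (x := c) hc.1 hc.2
  refine (measureReal_mono hsub (measure_ne_top _ _)).trans ((measureReal_biUnion_finset_le _ _).trans ?_)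
  refine (Finset.sum_le_card_nsmul _ _ ((K : ℝ) / P) fun c _ =>
    (uniformKeyMeasure_real_mem hK c).le).trans (le_of_eq ?_)
  rw [nsmul_eq_mul, hs.2]
  ring

theorem KConnected.le_gDeg {n k : ℕ} (hk : 1 ≤ k) (hn : k + 1 ≤ n) {G : SimpleGraph (Fin n)}
    (hG : KConnected G k) (v : Fin n) : k ≤ gDeg G v := by
  classical
  by_contra! hv
  let S : Finset (Fin n) := Finset.univ.filter fun w => G.Adj v w
  have hS : S.card = gDeg G v := by
    simp [S, gDeg, Fintype.card_subtype]
  have hvS : v ∉ S := by simp [S]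
  obtain ⟨w, hw⟩ : ∃ w, w ∉ insert v S := by
    by_contra! h
    have h1 : (insert v S).card = n := by
      rw [Finset.eq_univ_iff_forall.2 h, Finset.card_univ, Fintype.card_fin]
    have := Finset.card_insert_le v S
    omega
  rw [Finset.mem_insert, not_or] at hw
  have hconn := hG S (by omega)
  obtain ⟨walk⟩ := hconn.preconnected ⟨v, by simpa using hvS⟩ ⟨w, by simpa using hw.2⟩
  cases walk with
  | nil => exact hw.1 rfl
  | @cons _ u _ h _ =>
    have hadj : G.Adj v u.1 := h
    exact u.2 (by simpa [S] using hadj)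

theorem le_minDeg_iff {n k : ℕ} (hn : 0 < n) {G : SimpleGraph (Fin n)} :
    k ≤ minDeg G ↔ ∀ v, k ≤ gDeg G v := by
  constructor
  · exact fun h v => h.trans (Nat.sInf_le ⟨v, rfl⟩)
  · intro h
    have : Nonempty (Fin n) := ⟨⟨0, hn⟩⟩
    refine le_csInf (Set.range_nonempty _) ?_
    rintro _ ⟨v, rfl⟩
    exact h v

theorem measureReal_prod_eq_integral {X Y : Type*} [MeasurableSpace X] [MeasurableSpace Y]
    (μ : Measure X) (ν : Measure Y) [IsProbabilityMeasure μ] [IsProbabilityMeasure ν]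
    {s : Set (X × Y)} (hs : MeasurableSet s) :
    (μ.prod ν).real s = ∫ x, ν.real (Prod.mk x ⁻¹' s) ∂μ := by
  rw [measureReal_def, Measure.prod_apply hs]
  simp only [measureReal_def]
  rw [integral_toReal (measurable_measure_prodMk_left hs).aemeasurable
    (ae_of_all _ fun x => measure_lt_top _ _)]

/-- The data of a non-root vertex for which it is adjacent to the root `r` with key ring `A`. -/
def rootAdj {P K : ℕ} {R : Type} (A : KeyRing P K) (r : R) : Set (KeyRing P K × (R → Bool)) :=
  {B | (A.1 ∩ B.1).Nonempty} ×ˢ {c | c r = true}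

theorem measurableSet_rootAdj {P K : ℕ} {R : Type} (A : KeyRing P K) (r : R) :
    MeasurableSet (rootAdj A r) :=
  MeasurableSet.prod .of_discrete (measurableSet_eq_fun (by fun_prop) (by fun_prop))

theorem nonRootLaw_real_rootAdj {P K : ℕ} {p : ℝ} (hK : K ≤ P) (h0 : 0 ≤ p) (h1 : p ≤ 1)
    {R : Type} [Fintype R] (A : KeyRing P K) (r : R) :
    (nonRootLaw P K p R).real (rootAdj A r) = pef K P p := by
  have := isProbabilityMeasure_uniformKeyMeasure hK
  have := isProbabilityMeasure_bern h0 h1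
  have hc : (Measure.pi fun _ : R => bern p).real {c | c r = true} = p := by
    have hm := measurePreserving_eval (fun _ : R => bern p) r
    exact (hm.measureReal_preimage (s := {true}) (MeasurableSet.nullMeasurableSet .of_discrete)).trans
      (bern_real_true h0)
  rw [nonRootLaw, rootAdj, measureReal_prod_prod, uniformKeyMeasure_real_meet_keyRing hK, hc, pef,
    mul_comm]

theorem nonRootLaw_real_rootAdj_inter {P K : ℕ} {p : ℝ} (hK : K ≤ P) (h0 : 0 ≤ p) (h1 : p ≤ 1)
    (A A' : KeyRing P K) :
    (nonRootLaw P K p (Fin 2)).real (rootAdj A 0 ∩ rootAdj A' 1) =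
      p ^ 2 * (uniformKeyMeasure P K).real
        {B | (A.1 ∩ B.1).Nonempty ∧ (A'.1 ∩ B.1).Nonempty} := by
  have := isProbabilityMeasure_uniformKeyMeasure hK
  have := isProbabilityMeasure_bern h0 h1
  have e : rootAdj A (0 : Fin 2) ∩ rootAdj A' 1 =
      {B | (A.1 ∩ B.1).Nonempty ∧ (A'.1 ∩ B.1).Nonempty} ×ˢ {fun _ => true} := by
    ext ⟨B, c⟩
    simp only [rootAdj, Set.mem_inter_iff, Set.mem_prod, Set.mem_ofPred_eq, Set.mem_singleton_iff,
      funext_iff, Fin.forall_fin_two]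
    tauto
  rw [nonRootLaw, e, measureReal_prod_prod, measureReal_def (Measure.pi _), Measure.pi_singleton,
    ENNReal.toReal_prod, mul_comm]
  simp only [← measureReal_def, bern_real_true h0, Finset.prod_const, Finset.card_univ,
    Fintype.card_fin]

theorem card_adj_nonRoot_le_gDeg {n K P : ℕ} {R : Type} {ρ : R → Fin n} (ω : GonSpace n K P)
    (r : R) :
    Nat.card {z // (exploreRoots ρ ω).2 z ∈ rootAdj ((exploreRoots ρ ω).1 r) r} ≤
      gDeg (gonGraph ω) (ρ r) := by
  refine Nat.card_le_card_of_injective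
    (fun z => ⟨z.1.1, fun h => z.1.2 ⟨r, h⟩, z.2.1, z.2.2⟩) ?_
  intro z z' h
  exact Subtype.ext (Subtype.ext (Subtype.mk.inj h))

theorem card_adj_nonRoot_eq_gDeg {n K P : ℕ} {ρ : Unit → Fin n} (ω : GonSpace n K P) :
    Nat.card {z // (exploreRoots ρ ω).2 z ∈ rootAdj ((exploreRoots ρ ω).1 ()) ()} =
      gDeg (gonGraph ω) (ρ ()) := by
  refine (card_adj_nonRoot_le_gDeg ω ()).antisymm ?_
  refine Nat.card_le_card_of_injective
    (fun w => ⟨⟨w.1, by rintro ⟨_, h⟩; exact w.2.1 h⟩, w.2.2.1, w.2.2.2⟩) ?_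
  intro z z' h
  exact Subtype.ext (congrArg (fun z => z.1.1) h)

theorem card_nonRoot {n : ℕ} {R : Type} [Fintype R] {ρ : R → Fin n}
    (hρ : Function.Injective ρ) [Fintype (NonRoot ρ)] :
    Fintype.card (NonRoot ρ) = n - Fintype.card R := by
  classical
  rw [Fintype.card_subtype_compl, Fintype.card_fin]
  congr 1
  exact Set.card_range_of_injective hρ

/-- Degrees in `𝔾_on` have the binomial distribution. -/
theorem gonMeasure_real_gDeg_lt {n K P : ℕ} {p : ℝ} (hK : K ≤ P) (h0 : 0 ≤ p) (h1 : p ≤ 1)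
    (x : Fin n) (k : ℕ) :
    (gonMeasure n K P p).real {ω | gDeg (gonGraph ω) x < k} =
      binSum (1 - pef K P p) (pef K P p) (n - 1) k := by
  classical
  have := isProbabilityMeasure_uniformKeyMeasure hK
  have := isProbabilityMeasure_nonRootLaw (R := Unit) hK h0 h1
  let ρ : Unit → Fin n := fun _ => x
  have hρ : Function.Injective ρ := fun _ _ _ => rfl
  let F : Set ((Unit → KeyRing P K) × (NonRoot ρ → KeyRing P K × (Unit → Bool))) :=
    {a | Nat.card {z // a.2 z ∈ rootAdj (a.1 ()) ()} < k}
  have hF : MeasurableSet F := F.toFinite.measurableSet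
  have hset : {ω : GonSpace n K P | gDeg (gonGraph ω) x < k} = exploreRoots ρ ⁻¹' F := by
    ext ω
    simp only [F, Set.mem_preimage, Set.mem_ofPred_eq, card_adj_nonRoot_eq_gDeg, ρ]
  rw [hset, ← map_measureReal_apply .of_discrete hF, map_exploreRoots hK h0 h1 hρ,
    measureReal_prod_eq_integral _ _ hF]
  have hslice : ∀ A : Unit → KeyRing P K,
      (Measure.pi fun _ : NonRoot ρ => nonRootLaw P K p Unit).real (Prod.mk A ⁻¹' F) =
        binSum (1 - pef K P p) (pef K P p) (n - 1) k := by
    intro A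
    have h := pi_real_card_lt (Z := NonRoot ρ) (nonRootLaw P K p Unit)
      (measurableSet_rootAdj (A ()) ()) k
    rw [nonRootLaw_real_rootAdj hK h0 h1, card_nonRoot hρ, Fintype.card_unit] at h
    exact h
  simp only [hslice, integral_const, probReal_univ, one_smul]

theorem pi_real_card_lt_and_card_lt_le_union {Z T : Type*} [Fintype Z] [MeasurableSpace T]
    (ν : Measure T) [IsProbabilityMeasure ν] {Q₁ Q₂ : Set T} (hQ₁ : MeasurableSet Q₁)
    (hQ₂ : MeasurableSet Q₂) (k : ℕ) :
    (Measure.pi fun _ : Z => ν).real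
        {t | Nat.card {z // t z ∈ Q₁} < k ∧ Nat.card {z // t z ∈ Q₂} < k} ≤
      binSum (1 - ν.real (Q₁ ∪ Q₂)) (ν.real (Q₁ ∪ Q₂)) (Fintype.card Z) (2 * k - 1) := by
  classical
  rw [← pi_real_card_lt ν (hQ₁.union hQ₂)]
  refine measureReal_mono ?_
  rintro t ⟨h₁, h₂⟩
  have h : Nat.card {z // t z ∈ Q₁ ∪ Q₂} ≤
      Nat.card {z // t z ∈ Q₁} + Nat.card {z // t z ∈ Q₂} := by
    simp only [Nat.card_eq_fintype_card, Set.mem_union]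
    exact Fintype.card_subtype_or _ _
  change Nat.card {z // t z ∈ Q₁ ∪ Q₂} < 2 * k - 1
  omega

/-- Probability that a uniform key ring meets both of two given key rings. -/
def meetBoth {P K : ℕ} (A A' : KeyRing P K) : ℝ :=
  (uniformKeyMeasure P K).real {B | (A.1 ∩ B.1).Nonempty ∧ (A'.1 ∩ B.1).Nonempty}

theorem pi_finTwo_real_le {X : Type*} [MeasurableSpace X]
    (μ : Measure X) [IsProbabilityMeasure μ] {r : X → X → Prop} {g : ℝ}
    (hr : MeasurableSet {a : X × X | r a.1 a.2})
    (h : ∀ a, μ.real {b | r a b} ≤ g) :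
    (Measure.pi fun _ : Fin 2 => μ).real {a | r (a 0) (a 1)} ≤ g := by
  have hm := measurePreserving_finTwoArrow μ
  have := hm.measureReal_preimage hr.nullMeasurableSet
  have e : MeasurableEquiv.finTwoArrow ⁻¹' {a : X × X | r a.1 a.2} =
      {a : Fin 2 → X | r (a 0) (a 1)} := rfl
  rw [e] at this
  rw [this, measureReal_prod_eq_integral _ _ hr]
  refine (integral_mono (Measure.integrable_measure_prodMk_left hr (measure_ne_top _ _))
    (integrable_const g) h).trans ?_
  simp

theorem gonMeasure_real_gDeg_lt_and_gDeg_lt_le {n K P : ℕ} {p : ℝ} (hK : K ≤ P) (h0 : 0 ≤ p)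
    (h1 : p ≤ 1) (hq : pef K P p < 1) {x y : Fin n} (hxy : x ≠ y) (k : ℕ) {G₁ G₂ : ℝ}
    (hG₁ : ∀ A A' : KeyRing P K, (A.1 ∩ A'.1).card = 1 →
      binSum (1 - (2 * pef K P p - p ^ 2 * meetBoth A A'))
        (2 * pef K P p - p ^ 2 * meetBoth A A') (n - 2) (2 * k - 1) ≤ G₁)
    (hG₂ : ∀ A A' : KeyRing P K,
      binSum (1 - (2 * pef K P p - p ^ 2 * meetBoth A A'))
        (2 * pef K P p - p ^ 2 * meetBoth A A') (n - 2) (2 * k - 1) ≤ G₂)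
    (hG₁0 : 0 ≤ G₁) (hG₂0 : 0 ≤ G₂) :
    (gonMeasure n K P p).real {ω | gDeg (gonGraph ω) x < k ∧ gDeg (gonGraph ω) y < k} ≤
      (((1 - pef K P p)⁻¹) ^ k * binSum (1 - pef K P p) (pef K P p) (n - 2) k) ^ 2 +
        (K : ℝ) ^ 2 / P * G₁ + ((K : ℝ) ^ 2 / P) ^ 2 * G₂ := by
  classical
  have := isProbabilityMeasure_uniformKeyMeasure hK
  have := isProbabilityMeasure_nonRootLaw (R := Fin 2) hK h0 h1
  have := isProbabilityMeasure_gonMeasure (n := n) hK h0 h1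
  let ρ : Fin 2 → Fin n := ![x, y]
  have hρ : Function.Injective ρ := by
    intro a b h
    fin_cases a <;> fin_cases b <;> simp_all [ρ, eq_comm]
  let F : Set ((Fin 2 → KeyRing P K) × (NonRoot ρ → KeyRing P K × (Fin 2 → Bool))) :=
    {a | Nat.card {z // a.2 z ∈ rootAdj (a.1 0) 0} < k ∧
      Nat.card {z // a.2 z ∈ rootAdj (a.1 1) 1} < k}
  have hF : MeasurableSet F := F.toFinite.measurableSet
  have hset : {ω : GonSpace n K P | gDeg (gonGraph ω) x < k ∧ gDeg (gonGraph ω) y < k} ⊆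
      exploreRoots ρ ⁻¹' F := by
    rintro ω ⟨hx, hy⟩
    exact ⟨(card_adj_nonRoot_le_gDeg ω 0).trans_lt hx, (card_adj_nonRoot_le_gDeg ω 1).trans_lt hy⟩
  refine (measureReal_mono hset).trans ?_
  rw [← map_measureReal_apply .of_discrete hF, map_exploreRoots hK h0 h1 hρ,
    measureReal_prod_eq_integral _ _ hF]
  set q := pef K P p with hqdef
  set G₀ := (((1 - q)⁻¹) ^ k * binSum (1 - q) q (n - 2) k) ^ 2
  let E₁ : Set (Fin 2 → KeyRing P K) := {A | ((A 0).1 ∩ (A 1).1).Nonempty}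
  let E₂ : Set (Fin 2 → KeyRing P K) := {A | 2 ≤ ((A 0).1 ∩ (A 1).1).card}
  have hslice : ∀ A : Fin 2 → KeyRing P K,
      (Measure.pi fun _ : NonRoot ρ => nonRootLaw P K p (Fin 2)).real (Prod.mk A ⁻¹' F) ≤
        G₀ + E₁.indicator 1 A * G₁ + E₂.indicator 1 A * G₂ := by
    intro A
    have hq1 := nonRootLaw_real_rootAdj hK h0 h1 (A 0) (0 : Fin 2)
    have hq2 := nonRootLaw_real_rootAdj hK h0 h1 (A 1) (1 : Fin 2)
    have hq12 := nonRootLaw_real_rootAdj_inter hK h0 h1 (A 0) (A 1)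
    have hm1 := measurableSet_rootAdj (A 0) (0 : Fin 2)
    have hm2 := measurableSet_rootAdj (A 1) (1 : Fin 2)
    have hG₀ : 0 ≤ G₀ := sq_nonneg _
    have hunion := measureReal_union_add_inter (μ := nonRootLaw P K p (Fin 2))
      (s := rootAdj (A 0) 0) hm2
    have hcard : Fintype.card (NonRoot ρ) = n - 2 := by rw [card_nonRoot hρ, Fintype.card_fin]
    have hle := pi_real_card_lt_and_card_lt_le_union (Z := NonRoot ρ) (nonRootLaw P K p (Fin 2)) hm1 hm2 k
    rw [show (nonRootLaw P K p (Fin 2)).real (rootAdj (A 0) 0 ∪ rootAdj (A 1) 1) =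
      2 * q - p ^ 2 * meetBoth (A 0) (A 1) by unfold meetBoth; linarith, hcard] at hle
    rcases Nat.lt_trichotomy ((A 0).1 ∩ (A 1).1).card 1 with hc | hc | hc
    · have hempty : (A 0).1 ∩ (A 1).1 = ∅ := Finset.card_eq_zero.1 (by omega)
      have h₁ : A ∉ E₁ := by simp [E₁, hempty]
      have h₂ : A ∉ E₂ := by simp [E₂, hempty]
      rw [Set.indicator_of_notMem h₁, Set.indicator_of_notMem h₂, zero_mul, zero_mul, add_zero,
        add_zero]
      have hneg := uniformKeyMeasure_real_meet_and_meet_le hK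
        (Finset.disjoint_iff_inter_eq_empty.2 hempty)
      rw [(A 0).2, (A 1).2, ← psf_eq] at hneg
      have := pi_real_card_lt_and_card_lt_le (Z := NonRoot ρ) (nonRootLaw P K p (Fin 2)) hm1 hm2 hq hq1 hq2 (by
        rw [hq12, hqdef, pef, mul_pow, sq (psf K P)]
        gcongr) k
      rw [hcard] at this
      exact this
    · have h₁ : A ∈ E₁ := Finset.card_pos.1 (by omega)
      have h₂ : A ∉ E₂ := by simp [E₂, hc]
      rw [Set.indicator_of_mem h₁, Set.indicator_of_notMem h₂, Pi.one_apply]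
      have := hle.trans (hG₁ _ _ hc)
      refine le_trans this ?_
      linarith
    · have h₁ : A ∈ E₁ := Finset.card_pos.1 (by omega)
      have h₂ : A ∈ E₂ := hc
      rw [Set.indicator_of_mem h₁, Set.indicator_of_mem h₂, Pi.one_apply]
      have := hle.trans (hG₂ (A 0) (A 1))
      refine le_trans this ?_
      linarith
  have hE₁ : (Measure.pi fun _ : Fin 2 => uniformKeyMeasure P K).real E₁ ≤ (K : ℝ) ^ 2 / P :=
    pi_finTwo_real_le _ (r := fun A B : KeyRing P K => (A.1 ∩ B.1).Nonempty) .of_discrete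
      fun A => (uniformKeyMeasure_real_meet_keyRing hK A).le.trans (psf_le_sq_div hK)
  have hE₂ : (Measure.pi fun _ : Fin 2 => uniformKeyMeasure P K).real E₂ ≤
      ((K : ℝ) ^ 2 / P) ^ 2 :=
    pi_finTwo_real_le _ (r := fun A B : KeyRing P K => 2 ≤ (A.1 ∩ B.1).card) .of_discrete
      fun A => uniformKeyMeasure_real_two_le_card_inter_le hK A
  refine (integral_mono .of_finite .of_finite hslice).trans ?_
  rw [integral_add .of_finite .of_finite, integral_add .of_finite .of_finite,
    integral_mul_const, integral_mul_const, integral_indicator_one .of_discrete,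
    integral_indicator_one .of_discrete, integral_const, probReal_univ, one_smul]
  gcongr

theorem binSum_nonneg {a b : ℝ} (ha : 0 ≤ a) (hb : 0 ≤ b) (N k : ℕ) : 0 ≤ binSum a b N k :=
  Finset.sum_nonneg fun _ _ => by positivity

theorem mul_binSum_le_binSum_succ {q : ℝ} (h0 : 0 ≤ q) (h1 : q ≤ 1) (N k : ℕ) :
    (1 - q) * binSum (1 - q) q N k ≤ binSum (1 - q) q (N + 1) k := by
  have hq : 0 ≤ 1 - q := by linarith
  rw [binSum, binSum, Finset.mul_sum]
  refine Finset.sum_le_sum fun j _ => ?_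
  rcases Nat.lt_or_ge N j with h | h
  · rw [Nat.choose_eq_zero_of_lt h]
    simp only [Nat.cast_zero, zero_mul, mul_zero]
    positivity
  · rw [show N + 1 - j = (N - j) + 1 by omega, pow_succ]
    have hc : (N.choose j : ℝ) ≤ (N + 1).choose j := by
      exact_mod_cast Nat.choose_le_choose j (Nat.le_succ N)
    calc _ = (N.choose j : ℝ) * (q ^ j * ((1 - q) ^ (N - j) * (1 - q))) := by ring
      _ ≤ _ := by gcongr

/-- The constant in the lower bound for the lower binomial tail. -/
def tailConst (k : ℕ) : ℝ := (4 ^ (k - 1) * (k - 1).factorial : ℝ)⁻¹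

theorem tailConst_pos (k : ℕ) : 0 < tailConst k := by
  unfold tailConst
  positivity

theorem le_binSum {q : ℝ} (h0 : 0 ≤ q) (h1 : q ≤ 1) {M k : ℕ} (hk : 1 ≤ k) (hM : 2 * k ≤ M) :
    tailConst k * ((1 + M * q) ^ (k - 1) * (1 - q) ^ M) ≤ binSum (1 - q) q M k := by
  have hq : 0 ≤ 1 - q := by linarith
  have hterm : ∀ j < k, (M.choose j : ℝ) * (q ^ j * (1 - q) ^ (M - j)) ≤ binSum (1 - q) q M k :=
    fun j hj => Finset.single_le_sum (f := fun j => (M.choose j : ℝ) * (q ^ j * (1 - q) ^ (M - j)))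
      (fun _ _ => by positivity) (Finset.mem_range.2 hj)
  have hfac : (1 : ℝ) ≤ (k - 1).factorial := by exact_mod_cast (k - 1).factorial_pos
  have ht : 0 ≤ (M : ℝ) * q := by positivity
  have hpow : (0 : ℝ) < 4 ^ (k - 1) := by positivity
  rw [tailConst, inv_mul_le_iff₀ (by positivity)]
  rcases le_total ((M : ℝ) * q) 1 with h | h
  · have h2 := hterm 0 (by omega)
    simp only [Nat.choose_zero_right, Nat.cast_one, pow_zero, one_mul, Nat.sub_zero] at h2
    have h3 : (1 + (M : ℝ) * q) ^ (k - 1) ≤ 4 ^ (k - 1) := by gcongr; linarith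
    have h4 : (4 : ℝ) ^ (k - 1) ≤ 4 ^ (k - 1) * (k - 1).factorial :=
      le_mul_of_one_le_right hpow.le hfac
    have h5 : 0 ≤ (1 - q) ^ M := by positivity
    exact mul_le_mul (h3.trans h4) h2 h5 (by positivity)
  · have h2 := hterm (k - 1) (by omega)
    have h3 : (1 + (M : ℝ) * q) ^ (k - 1) ≤ (2 * (M * q)) ^ (k - 1) := by gcongr; linarith
    have h4 : ((M : ℝ) / 2) ^ (k - 1) / (k - 1).factorial ≤ M.choose (k - 1) := by
      refine le_trans ?_ (Nat.pow_le_choose (α := ℝ) (k - 1) M)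
      have : (M : ℝ) / 2 ≤ ((M + 1 - (k - 1) : ℕ) : ℝ) := by
        rw [div_le_iff₀ two_pos]
        exact_mod_cast (by omega : M ≤ (M + 1 - (k - 1)) * 2)
      gcongr
    rw [div_le_iff₀ (by positivity)] at h4
    have h5 : (1 - q) ^ M ≤ (1 - q) ^ (M - (k - 1)) :=
      pow_le_pow_of_le_one hq (by linarith) (Nat.sub_le _ _)
    calc (1 + (M : ℝ) * q) ^ (k - 1) * (1 - q) ^ M
        ≤ (2 * (M * q)) ^ (k - 1) * (1 - q) ^ (M - (k - 1)) := by gcongr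
      _ = 4 ^ (k - 1) * (((M : ℝ) / 2) ^ (k - 1)) * (q ^ (k - 1) * (1 - q) ^ (M - (k - 1))) := by
          have e : (2 * ((M : ℝ) * q)) ^ (k - 1) =
              4 ^ (k - 1) * ((M : ℝ) / 2) ^ (k - 1) * q ^ (k - 1) := by
            rw [← mul_pow, ← mul_pow]
            congr 1
            ring
          rw [e]
          ring
      _ ≤ 4 ^ (k - 1) * (M.choose (k - 1) * (k - 1).factorial) *
            (q ^ (k - 1) * (1 - q) ^ (M - (k - 1))) := by gcongr
      _ = 4 ^ (k - 1) * (k - 1).factorial *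
            (M.choose (k - 1) * (q ^ (k - 1) * (1 - q) ^ (M - (k - 1)))) := by ring
      _ ≤ _ := by gcongr

theorem binSum_two_mul_sub_le {q a : ℝ} (ha : 0 ≤ a) (haq : a ≤ q) (hq : q ≤ 1 / 40) {N k : ℕ} :
    binSum (1 - (2 * q - a)) (2 * q - a) N (2 * k - 1) ≤
      (2 * k * 4 ^ (2 * k)) * ((1 + N * q) ^ (k - 1) * (1 - q) ^ N) ^ 2 *
        Real.exp (11 / 10 * (N * a)) := by
  have hq0 : 0 ≤ q := ha.trans haq
  set r := 2 * q - a with hr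
  have hr0 : 0 ≤ r := by linarith
  have hr1 : 1 / 2 ≤ 1 - r := by linarith
  have ht : 0 ≤ (N : ℝ) * q := by positivity
  have hterm : ∀ j ∈ Finset.range (2 * k - 1),
      (N.choose j : ℝ) * (r ^ j * (1 - r) ^ (N - j)) ≤
        4 ^ (2 * k) * (1 + N * q) ^ (2 * (k - 1)) * (1 - r) ^ N := by
    intro j hj
    have hj := Finset.mem_range.1 hj
    rcases Nat.lt_or_ge N j with h | h
    · rw [Nat.choose_eq_zero_of_lt h]
      simp only [Nat.cast_zero, zero_mul]
      have : 0 ≤ 1 - r := by linarith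
      positivity
    · have h1 : (N.choose j : ℝ) ≤ (N : ℝ) ^ j := by exact_mod_cast Nat.choose_le_pow N j
      have h2 : (1 - r) ^ (N - j) ≤ 2 ^ j * (1 - r) ^ N := by
        have e : (1 - r) ^ N = (1 - r) ^ j * (1 - r) ^ (N - j) := by
          rw [← pow_add]
          congr 1
          omega
        rw [e, ← mul_assoc, ← mul_pow]
        refine le_mul_of_one_le_left (pow_nonneg (by linarith) _) (one_le_pow₀ (by linarith))
      have h3 : (2 * (N * r)) ≤ 4 * (1 + N * q) := by
        have : (N : ℝ) * r ≤ N * (2 * q) := by gcongr; linarith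
        nlinarith
      have hr1' : 0 ≤ 1 - r := by linarith
      calc (N.choose j : ℝ) * (r ^ j * (1 - r) ^ (N - j))
          ≤ (N : ℝ) ^ j * (r ^ j * (2 ^ j * (1 - r) ^ N)) := by gcongr
        _ = (2 * (N * r)) ^ j * (1 - r) ^ N := by rw [mul_pow, mul_pow]; ring
        _ ≤ (4 * (1 + N * q)) ^ j * (1 - r) ^ N := by gcongr
        _ = 4 ^ j * (1 + N * q) ^ j * (1 - r) ^ N := by rw [mul_pow]
        _ ≤ 4 ^ (2 * k) * (1 + N * q) ^ (2 * (k - 1)) * (1 - r) ^ N := by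
            gcongr
            · norm_num
            · omega
            · linarith
            · omega
  have hbase : 1 - r ≤ (1 - q) ^ 2 * Real.exp (11 / 10 * a) := by
    have h1 := Real.add_one_le_exp (11 / 10 * a)
    have h2 : (1 - q) ^ 2 * (11 / 10 * a + 1) ≤ (1 - q) ^ 2 * Real.exp (11 / 10 * a) := by gcongr
    refine le_trans ?_ h2
    have h3 : (10 : ℝ) / 11 ≤ (1 - q) ^ 2 := by nlinarith
    nlinarith
  have hpow : (1 - r) ^ N ≤ ((1 - q) ^ N) ^ 2 * Real.exp (11 / 10 * (N * a)) := by
    refine (pow_le_pow_left₀ (by linarith) hbase N).trans (le_of_eq ?_)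
    rw [mul_pow, ← Real.exp_nat_mul, ← pow_mul, ← pow_mul, mul_comm 2 N]
    ring_nf
  have hq1 : 0 ≤ 1 - q := by linarith
  refine (Finset.sum_le_card_nsmul _ _ _ hterm).trans ?_
  rw [Finset.card_range, nsmul_eq_mul]
  have hcast : ((2 * k - 1 : ℕ) : ℝ) ≤ 2 * k := by
    exact_mod_cast (by omega : 2 * k - 1 ≤ 2 * k)
  calc ((2 * k - 1 : ℕ) : ℝ) * (4 ^ (2 * k) * (1 + N * q) ^ (2 * (k - 1)) * (1 - r) ^ N)
      ≤ 2 * k * (4 ^ (2 * k) * (1 + N * q) ^ (2 * (k - 1)) *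
          (((1 - q) ^ N) ^ 2 * Real.exp (11 / 10 * (N * a)))) := by
        gcongr
    _ = _ := by
        rw [mul_pow, ← pow_mul (1 + (N : ℝ) * q), mul_comm (k - 1) 2]
        ring

/-- The constant in the bound for the union of two neighbourhoods. -/
def unionConst (k : ℕ) : ℝ := 2 * k * 4 ^ (2 * k) * (2 / tailConst k) ^ 2

theorem unionConst_nonneg (k : ℕ) : 0 ≤ unionConst k := by
  unfold unionConst
  positivity

theorem binSum_two_mul_sub_le_sq {q a : ℝ} (ha : 0 ≤ a) (haq : a ≤ q) (hq : q ≤ 1 / 40)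
    {N k : ℕ} (hk : 1 ≤ k) (hN : 2 * k ≤ N) :
    binSum (1 - (2 * q - a)) (2 * q - a) N (2 * k - 1) ≤
      unionConst k * binSum (1 - q) q (N + 1) k ^ 2 * Real.exp (11 / 10 * (N * a)) := by
  have hq0 : 0 ≤ q := ha.trans haq
  have hq1 : 0 ≤ 1 - q := by linarith
  have hc := tailConst_pos k
  refine (binSum_two_mul_sub_le ha haq hq).trans ?_
  have h1 := le_binSum hq0 (by linarith) hk (by omega : 2 * k ≤ N + 1)
  have h2 : (1 + (N : ℝ) * q) ^ (k - 1) * (1 - q) ^ N ≤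
      2 / tailConst k * binSum (1 - q) q (N + 1) k := by
    rw [div_mul_eq_mul_div, le_div_iff₀ hc]
    have h3 : (1 - q) ^ N ≤ 2 * (1 - q) ^ (N + 1) := by
      rw [pow_succ]
      nlinarith [pow_nonneg hq1 N]
    have h4 : (1 + (N : ℝ) * q) ^ (k - 1) ≤ (1 + ((N + 1 : ℕ) : ℝ) * q) ^ (k - 1) := by
      gcongr
      exact N.le_succ
    calc (1 + (N : ℝ) * q) ^ (k - 1) * (1 - q) ^ N * tailConst k
        ≤ (1 + ((N + 1 : ℕ) : ℝ) * q) ^ (k - 1) * (2 * (1 - q) ^ (N + 1)) * tailConst k := by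
          gcongr
      _ = 2 * (tailConst k * ((1 + ((N + 1 : ℕ) : ℝ) * q) ^ (k - 1) * (1 - q) ^ (N + 1))) := by
          ring
      _ ≤ _ := by gcongr
  calc _ ≤ 2 * k * 4 ^ (2 * k) * (2 / tailConst k * binSum (1 - q) q (N + 1) k) ^ 2 *
          Real.exp (11 / 10 * (N * a)) := by gcongr
    _ = _ := by
      rw [unionConst]
      ring

/-- Second moment bound: if `n` events have equal positive probabilities `m` and pairwise
intersections of probability at most `J`, then with high probability one of them occurs. -/
theorem measureReal_forall_notMem_le {Ω : Type*} [MeasurableSpace Ω] [Finite Ω]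
    [DiscreteMeasurableSpace Ω] (μ : Measure Ω) [IsProbabilityMeasure μ] {n : ℕ} (hn : 0 < n)
    (E : Fin n → Set Ω) {m J : ℝ} (hm : 0 < m) (hJ0 : 0 ≤ J) (hE : ∀ i, μ.real (E i) = m)
    (hJ : ∀ i j, i ≠ j → μ.real (E i ∩ E j) ≤ J) :
    μ.real {ω | ∀ i, ω ∉ E i} ≤ 1 / (n * m) + (J / m ^ 2 - 1) := by
  classical
  have hn' : (0 : ℝ) < n := by exact_mod_cast hn
  let Y : Ω → ℝ := fun ω => ∑ i, (E i).indicator 1 ω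
  have hY : ∫ ω, Y ω ∂μ = n * m := by
    simp only [Y]
    rw [integral_finsetSum _ fun _ _ => .of_finite]
    simp [integral_indicator_one (MeasurableSet.of_discrete), hE]
  have hYY : ∫ ω, Y ω ^ 2 ∂μ ≤ n * m + n ^ 2 * J := by
    have e : ∀ ω, Y ω ^ 2 = ∑ i, ∑ j, (E i ∩ E j).indicator 1 ω := by
      intro ω
      simp only [Y]
      rw [sq, Finset.sum_mul_sum]
      refine Finset.sum_congr rfl fun i _ => Finset.sum_congr rfl fun j _ => ?_
      rw [Set.inter_indicator_one, Pi.mul_apply]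
    simp only [e]
    rw [integral_finsetSum _ fun _ _ => .of_finite]
    have hrow : ∀ i, ∫ ω, ∑ j, (E i ∩ E j).indicator (1 : Ω → ℝ) ω ∂μ ≤ m + n * J := by
      intro i
      rw [integral_finsetSum _ fun _ _ => .of_finite]
      simp only [integral_indicator_one (MeasurableSet.of_discrete)]
      calc ∑ j, μ.real (E i ∩ E j) ≤ ∑ j : Fin n, ((if i = j then m else 0) + J) := by
            refine Finset.sum_le_sum fun j _ => ?_
            split_ifs with h
            · subst h
              rw [Set.inter_self, hE]
              linarith
            · linarith [hJ i j h]
        _ = m + n * J := by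
            rw [Finset.sum_add_distrib]
            simp
    refine (Finset.sum_le_sum fun i _ => hrow i).trans (le_of_eq ?_)
    simp
    ring
  have hvar : ∫ ω, (Y ω - n * m) ^ 2 ∂μ ≤ n * m + n ^ 2 * J - (n * m) ^ 2 := by
    have e : ∀ ω, (Y ω - n * m) ^ 2 = Y ω ^ 2 - 2 * (n * m) * Y ω + (n * m) ^ 2 := by
      intro ω
      ring
    simp only [e]
    rw [integral_add .of_finite .of_finite, integral_sub .of_finite .of_finite,
      integral_const_mul, hY]
    simp
    nlinarith
  have hlow : μ.real {ω | ∀ i, ω ∉ E i} * (n * m) ^ 2 ≤ ∫ ω, (Y ω - n * m) ^ 2 ∂μ := by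
    rw [← integral_indicator_one (MeasurableSet.of_discrete), ← integral_mul_const]
    refine integral_mono .of_finite .of_finite fun ω => ?_
    by_cases h : ω ∈ {ω | ∀ i, ω ∉ E i}
    · have hz : Y ω = 0 := Finset.sum_eq_zero fun i _ => Set.indicator_of_notMem (h i) _
      simp only [Set.indicator_of_mem h, hz]
      simp
    · simp only [Set.indicator_of_notMem h]
      nlinarith [sq_nonneg (Y ω - n * m)]
  have hpos : 0 < (n * m) ^ 2 := by positivity
  have := hlow.trans hvar
  rw [← le_div_iff₀ hpos] at this
  refine this.trans (le_of_eq ?_)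
  field_simp
  ring

theorem gonMeasure_real_forall_le_gDeg_le {n K P k : ℕ} {p : ℝ} (hK : K ≤ P)
    (h0 : 0 ≤ p) (h1 : p ≤ 1) (hk : 1 ≤ k) (hn : 2 * k + 2 ≤ n) (hq : pef K P p ≤ 1 / 40) :
    (gonMeasure n K P p).real {ω | ∀ v, k ≤ gDeg (gonGraph ω) v} ≤
      1 / (n * binSum (1 - pef K P p) (pef K P p) (n - 1) k) +
      ((((1 - pef K P p)⁻¹) ^ (k + 1)) ^ 2 - 1) +
      unionConst k * ((K : ℝ) ^ 2 / P *
          Real.exp (11 / 10 * (n * (p ^ 2 * ((K : ℝ) / P + ((K : ℝ) ^ 2 / P) ^ 2)))) +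
        ((K : ℝ) ^ 2 / P) ^ 2 * Real.exp (11 / 10 * (n * (p * pef K P p)))) := by
  have := isProbabilityMeasure_uniformKeyMeasure hK
  have := isProbabilityMeasure_gonMeasure (n := n) hK h0 h1
  have hq0 : 0 ≤ pef K P p := mul_nonneg h0 psf_nonneg
  have hpq : p * pef K P p ≤ pef K P p := mul_le_of_le_one_left hq0 h1
  have hboth : ∀ A A' : KeyRing P K, p ^ 2 * meetBoth A A' ≤ p * pef K P p := by
    intro A A'
    rw [pef, ← mul_assoc, ← sq]
    have : meetBoth A A' ≤ psf K P := by
      rw [← uniformKeyMeasure_real_meet_keyRing hK A]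
      exact measureReal_mono fun B hB => hB.1
    gcongr
  have hboth0 : ∀ A A' : KeyRing P K, 0 ≤ p ^ 2 * meetBoth A A' := fun A A' =>
    mul_nonneg (by positivity) measureReal_nonneg
  have hdeg := fun x : Fin n => gonMeasure_real_gDeg_lt hK h0 h1 x k
  have hjoint := fun (x y : Fin n) (hxy : x ≠ y) (G₁ G₂ : ℝ) =>
    gonMeasure_real_gDeg_lt_and_gDeg_lt_le hK h0 h1 (by linarith) hxy k (G₁ := G₁) (G₂ := G₂)
  set q := pef K P p with hqdef
  set s : ℝ := (K : ℝ) ^ 2 / P with hs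
  have hs0 : 0 ≤ s := by positivity
  have hq1 : 0 < 1 - q := by linarith
  set m := binSum (1 - q) q (n - 1) k with hm
  have hmpos : 0 < m := by
    refine lt_of_lt_of_le ?_ (le_binSum hq0 (by linarith) hk (by omega))
    have := tailConst_pos k
    positivity
  obtain ⟨N, rfl⟩ : ∃ N, n = N + 2 := ⟨n - 2, by omega⟩
  rw [show N + 2 - 1 = N + 1 by omega] at hm
  have hN : (N : ℝ) ≤ (N + 2 : ℕ) := by exact_mod_cast (by omega)
  have hu := unionConst_nonneg k
  have hG : ∀ (A A' : KeyRing P K) (a : ℝ), p ^ 2 * meetBoth A A' ≤ a →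
      binSum (1 - (2 * q - p ^ 2 * meetBoth A A')) (2 * q - p ^ 2 * meetBoth A A') (N + 2 - 2)
        (2 * k - 1) ≤ unionConst k * m ^ 2 * Real.exp (11 / 10 * ((N + 2 : ℕ) * a)) := by
    intro A A' a ha
    rw [show N + 2 - 2 = N by omega]
    refine (binSum_two_mul_sub_le_sq (hboth0 A A') ((hboth A A').trans hpq) hq hk
      (by omega)).trans ?_
    rw [← hm]
    have := hboth0 A A'
    gcongr
  have hmain := measureReal_forall_notMem_le (gonMeasure (N + 2) K P p) (by omega)
    (fun x => {ω | gDeg (gonGraph ω) x < k}) hmpos (J :=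
      ((((1 - q)⁻¹) ^ (k + 1)) ^ 2) * m ^ 2 +
        s * (unionConst k * m ^ 2 *
          Real.exp (11 / 10 * ((N + 2 : ℕ) * (p ^ 2 * ((K : ℝ) / P + s ^ 2))))) +
        s ^ 2 * (unionConst k * m ^ 2 * Real.exp (11 / 10 * ((N + 2 : ℕ) * (p * q)))))
    (by positivity) hdeg (by
      intro x y hxy
      refine (hjoint x y hxy _ _ (fun A A' h => hG A A' (p ^ 2 * ((K : ℝ) / P + s ^ 2)) ?_) (fun A A' => hG A A' _ (hboth A A'))
        (by positivity) (by positivity)).trans ?_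
      · have := uniformKeyMeasure_real_meet_and_meet_le_of_card_inter_le_one hK h.le
        rw [meetBoth]
        gcongr
      · gcongr
        rw [← mul_pow, show N + 2 - 2 = N by omega]
        have h2 := mul_binSum_le_binSum_succ hq0 (by linarith) N k
        rw [← hm] at h2
        have hb := binSum_nonneg hq1.le hq0 N k
        have h3 : binSum (1 - q) q N k ≤ (1 - q)⁻¹ * m := by
          rw [inv_mul_eq_div, le_div_iff₀ hq1]
          linarith
        rw [pow_succ (1 - q)⁻¹ k, mul_assoc]
        gcongr)
  simp only [Set.mem_ofPred_eq, not_lt] at hmain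
  refine hmain.trans (le_of_eq ?_)
  field_simp
  ring

theorem exp_neg_add_le_pow {q : ℝ} (h1 : q ≤ 1 / 2) (n : ℕ) :
    Real.exp (-(n * q + 2 * (n * q ^ 2))) ≤ (1 - q) ^ n := by
  have hq : 0 < 1 - q := by linarith
  have hbase : Real.exp (-(q + 2 * q ^ 2)) ≤ 1 - q := by
    rw [Real.exp_neg]
    refine inv_le_of_inv_le₀ hq ?_
    refine le_trans ?_ (Real.add_one_le_exp _)
    rw [inv_le_iff_one_le_mul₀ hq]
    nlinarith [mul_nonneg (sq_nonneg q) (by linarith : 0 ≤ 1 - 2 * q)]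
  refine le_trans (le_of_eq ?_) (pow_le_pow_left₀ (Real.exp_nonneg _) hbase n)
  rw [← Real.exp_nat_mul]
  ring_nf

theorem le_mul_binSum {n k : ℕ} {q α : ℝ} (hk : 1 ≤ k) (hn : 2 * k + 1 ≤ n) (h0 : 0 ≤ q)
    (h1 : q ≤ 1 / 2) (hl : 0 < Real.log n) (hnq : n * q ^ 2 ≤ 1 / 2)
    (hα : n * q = Real.log n + ((k : ℝ) - 1) * Real.log (Real.log n) + α) :
    tailConst k * (Real.exp (-1) * (1 / 2) ^ (k - 1)) *
      min (Real.exp (Real.log n / 2)) (Real.exp (-α)) ≤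
      n * binSum (1 - q) q (n - 1) k := by
  have hc := tailConst_pos k
  have hn0 : (0 : ℝ) < n := by exact_mod_cast (by omega : 0 < n)
  have hM : (((n - 1 : ℕ) : ℝ)) = n - 1 := by
    rw [Nat.cast_sub (by omega), Nat.cast_one]
  have hbin := le_binSum h0 (by linarith) hk (by omega : 2 * k ≤ n - 1)
  have hpow : Real.exp (-1) * Real.exp (-(n * q)) ≤ (1 - q) ^ (n - 1) := by
    rw [← Real.exp_add]
    refine le_trans ?_ ((exp_neg_add_le_pow h1 n).trans
      (pow_le_pow_of_le_one (by linarith) (by linarith) (Nat.sub_le n 1)))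
    exact Real.exp_le_exp.2 (by linarith)
  have hnexp : (n : ℝ) * Real.exp (-(n * q)) = Real.exp (Real.log n - n * q) := by
    rw [sub_eq_add_neg, Real.exp_add, Real.exp_log hn0]
  have hM0 : 0 ≤ (((n - 1 : ℕ) : ℝ)) * q := by positivity
  have hM1 : n * q ≤ 1 + (((n - 1 : ℕ) : ℝ)) * q := by
    rw [hM]
    linarith
  have hmin : (1 / 2) ^ (k - 1) * min (Real.exp (Real.log n / 2)) (Real.exp (-α)) ≤
      (1 + (((n - 1 : ℕ) : ℝ)) * q) ^ (k - 1) * (n * Real.exp (-(n * q))) := by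
    rw [hnexp]
    rcases le_total (Real.log n / 2) (n * q) with h | h
    · have e : Real.exp (Real.log n - n * q) * Real.log n ^ (k - 1) = Real.exp (-α) := by
        have : Real.log n ^ (k - 1) = Real.exp (((k : ℝ) - 1) * Real.log (Real.log n)) := by
          rw [← Nat.cast_pred (by omega : 0 < k), Real.exp_nat_mul, Real.exp_log hl]
        rw [this, ← Real.exp_add, hα]
        ring_nf
      calc _ ≤ (1 / 2) ^ (k - 1) * Real.exp (-α) := by
            gcongr
            exact min_le_right _ _
        _ = (Real.log n / 2) ^ (k - 1) * Real.exp (Real.log n - n * q) := by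
            rw [← e, div_pow, div_pow]
            ring
        _ ≤ _ := by
            gcongr
            exact h.trans hM1
    · have h2 : ((1 : ℝ) / 2) ^ (k - 1) ≤ (1 + (((n - 1 : ℕ) : ℝ)) * q) ^ (k - 1) := by
        gcongr
        linarith
      have h3 : min (Real.exp (Real.log n / 2)) (Real.exp (-α)) ≤ Real.exp (Real.log n - n * q) :=
        (min_le_left _ _).trans (Real.exp_le_exp.2 (by linarith))
      gcongr
  calc _ = tailConst k * Real.exp (-1) *
        ((1 / 2) ^ (k - 1) * min (Real.exp (Real.log n / 2)) (Real.exp (-α))) := by ring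
    _ ≤ tailConst k * Real.exp (-1) *
        ((1 + (((n - 1 : ℕ) : ℝ)) * q) ^ (k - 1) * (n * Real.exp (-(n * q)))) := by gcongr
    _ = n * (tailConst k * ((1 + (((n - 1 : ℕ) : ℝ)) * q) ^ (k - 1) *
        (Real.exp (-1) * Real.exp (-(n * q))))) := by ring
    _ ≤ n * (tailConst k * ((1 + (((n - 1 : ℕ) : ℝ)) * q) ^ (k - 1) * (1 - q) ^ (n - 1))) := by
        gcongr
    _ ≤ _ := by gcongr

theorem keyRing_correction_le {n K P : ℕ} {p : ℝ} (hK2 : 2 ≤ K) (hK : K ≤ P) (h0 : 0 < p)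
    (h1 : p ≤ 1) (hn : 0 < n) (hs : (K : ℝ) ^ 2 / P ≤ 1 / 10) (hl : 0 ≤ Real.log n)
    (hnq : n * pef K P p ≤ 11 / 10 * Real.log n) (hnq2 : n * pef K P p ^ 2 ≤ 1 / 2) {c : ℝ}
    (hc : c = (K : ℝ) ^ 2 / P * Real.exp 1 +
      121 / 100 * (Real.log n ^ 2 / Real.exp (33 / 100 * Real.log n))) :
    (K : ℝ) ^ 2 / P *
          Real.exp (11 / 10 * (n * (p ^ 2 * ((K : ℝ) / P + ((K : ℝ) ^ 2 / P) ^ 2)))) +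
        ((K : ℝ) ^ 2 / P) ^ 2 * Real.exp (11 / 10 * (n * (p * pef K P p))) ≤
      Real.exp 1 * c + c ^ 2 := by
  have hn0 : (0 : ℝ) < n := by exact_mod_cast hn
  have hP0 : (0 : ℝ) < P := by exact_mod_cast (by omega : 0 < P)
  have hps := sq_div_le_psf (by omega) hK
  have hps0 : 0 ≤ psf K P := psf_nonneg
  have hKP : (K : ℝ) / P ≤ (K : ℝ) ^ 2 / P / 2 := by
    have : (2 : ℝ) ≤ K := by exact_mod_cast hK2
    rw [div_div, mul_comm, ← div_div]
    gcongr
    nlinarith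
  have hs0 : 0 ≤ (K : ℝ) ^ 2 / P := by positivity
  set s : ℝ := (K : ℝ) ^ 2 / P with hsdef
  set l := Real.log n with hldef
  have hsq : p * s ≤ 11 / 10 * pef K P p := by
    rw [pef]
    nlinarith [mul_nonneg h0.le hps0]
  have hq0 : 0 ≤ pef K P p := mul_nonneg h0.le hps0
  set q := pef K P p with hq
  set θ := Real.exp (67 / 100 * (p * l)) with hθ
  have hpl : p * (n * q) ≤ p * (11 / 10 * l) := by gcongr
  have hθ1 : Real.exp (11 / 10 * (n * (p ^ 2 * ((K : ℝ) / P + s ^ 2)))) ≤ Real.exp 1 * θ := by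
    rw [hθ, ← Real.exp_add]
    refine Real.exp_le_exp.2 ?_
    have e1 : p ^ 2 * ((K : ℝ) / P) ≤ 11 / 20 * (p * q) := by
      calc p ^ 2 * ((K : ℝ) / P) ≤ p ^ 2 * (s / 2) := by gcongr
        _ = p * (p * s) / 2 := by ring
        _ ≤ p * (11 / 10 * q) / 2 := by gcongr
        _ = _ := by ring
    have e2 : p ^ 2 * s ^ 2 ≤ 121 / 100 * q ^ 2 := by
      calc p ^ 2 * s ^ 2 = (p * s) ^ 2 := by ring
        _ ≤ (11 / 10 * q) ^ 2 := by gcongr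
        _ = _ := by ring
    have e3 : (n : ℝ) * (p ^ 2 * ((K : ℝ) / P + s ^ 2)) ≤
        n * (11 / 20 * (p * q) + 121 / 100 * q ^ 2) := by
      gcongr
      linarith
    nlinarith [mul_nonneg h0.le hl]
  have hθ2 : Real.exp (11 / 10 * (n * (p * q))) ≤ θ ^ 2 := by
    rw [hθ, ← Real.exp_nat_mul]
    refine Real.exp_le_exp.2 ?_
    push_cast
    nlinarith [mul_nonneg h0.le hl]
  have hθ0 : 0 < θ := Real.exp_pos _
  have hmain : s * θ ≤ c := by
    rw [hc]
    rcases le_total (p * l) 1 with h | h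
    · have : θ ≤ Real.exp 1 := Real.exp_le_exp.2 (by linarith)
      have h2 : 0 ≤ 121 / 100 * (l ^ 2 / Real.exp (33 / 100 * l)) := by positivity
      nlinarith
    · have hns : n * s ≤ 121 / 100 * l ^ 2 := by
        calc n * s ≤ n * s * (p * l) := le_mul_of_one_le_right (by positivity) h
          _ = n * (p * s) * l := by ring
          _ ≤ n * (11 / 10 * q) * l := by gcongr
          _ = 11 / 10 * l * (n * q) := by ring
          _ ≤ 11 / 10 * l * (11 / 10 * l) := by gcongr
          _ = _ := by ring
      have hθ3 : θ * Real.exp (33 / 100 * l) ≤ n := by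
        rw [hθ, ← Real.exp_add, ← Real.exp_log hn0]
        refine Real.exp_le_exp.2 ?_
        nlinarith
      have h2 : s * θ ≤ 121 / 100 * (l ^ 2 / Real.exp (33 / 100 * l)) := by
        rw [← mul_div_assoc, le_div_iff₀ (Real.exp_pos _)]
        calc s * θ * Real.exp (33 / 100 * l) = s * (θ * Real.exp (33 / 100 * l)) := by ring
          _ ≤ s * n := by gcongr
          _ ≤ _ := by linarith
      have := mul_nonneg hs0 (Real.exp_nonneg 1)
      linarith
  calc _ ≤ s * (Real.exp 1 * θ) + s ^ 2 * θ ^ 2 := by gcongr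
    _ = Real.exp 1 * (s * θ) + (s * θ) ^ 2 := by ring
    _ ≤ _ := by gcongr

theorem tendsto_log_natCast_atTop : Tendsto (fun n : ℕ => Real.log n) atTop atTop :=
  Real.tendsto_log_atTop.comp tendsto_natCast_atTop_atTop

theorem tendsto_log_pow_div_exp (m : ℕ) {b : ℝ} (hb : 0 < b) :
    Tendsto (fun n : ℕ => Real.log n ^ m / Real.exp (b * Real.log n)) atTop (nhds 0) :=
  (isLittleO_pow_exp_pos_mul_atTop m hb).tendsto_div_nhds_zero.comp tendsto_log_natCast_atTop

theorem tendsto_gonMeasure_real_forall_le_gDeg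
    (k : ℕ) (hk : 1 ≤ k) (K P : ℕ → ℕ) (p : ℕ → ℝ)
    (hKP : ∀ n, K n ≤ P n) (hp0 : ∀ n, 0 < p n) (hp1 : ∀ n, p n < 1)
    (hK2 : ∀ᶠ n : ℕ in atTop, 2 ≤ K n)
    (hKsq : Tendsto (fun n : ℕ => ((K n : ℝ)) ^ 2 / (P n : ℝ)) atTop (nhds 0))
    (α : ℕ → ℝ)
    (hα : ∀ n, 1 ≤ n → pef (K n) (P n) (p n) =
      (Real.log n + ((k : ℝ) - 1) * Real.log (Real.log n) + α n) / (n : ℝ))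
    (hαbot : Tendsto α atTop atBot) :
    Tendsto (fun n : ℕ => (gonMeasure n (K n) (P n) (p n)).real
        {ω | ∀ v, k ≤ gDeg (gonGraph ω) v}) atTop (nhds 0) := by
  set q : ℕ → ℝ := fun n => pef (K n) (P n) (p n) with hq
  have hq0 : ∀ n, 0 ≤ q n := fun n => mul_nonneg (hp0 n).le psf_nonneg
  have hnq : ∀ᶠ n : ℕ in atTop,
      n * q n = Real.log n + ((k : ℝ) - 1) * Real.log (Real.log n) + α n := by
    filter_upwards [eventually_ge_atTop 1] with n hn
    have : (n : ℝ) ≠ 0 := by positivity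
    simp only [hq, hα n hn]
    field_simp
  have hlog1 : ∀ᶠ n : ℕ in atTop, 1 ≤ Real.log n := tendsto_log_natCast_atTop.eventually_ge_atTop 1
  have hnq_le : ∀ᶠ n : ℕ in atTop, n * q n ≤ 11 / 10 * Real.log n := by
    have hk0 : (0 : ℝ) < k := by exact_mod_cast hk
    have hloglog := tendsto_log_natCast_atTop.eventually
      (Real.isLittleO_log_id_atTop.def (by positivity : (0 : ℝ) < 1 / (10 * k)))
    filter_upwards [hnq, hlog1, hloglog, hαbot.eventually_le_atBot 0] with n h1 h2 h3 h4
    rw [h1]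
    rw [Real.norm_of_nonneg (Real.log_nonneg h2), id, Real.norm_of_nonneg (by linarith)] at h3
    have hk1 : (1 : ℝ) ≤ k := by exact_mod_cast hk
    have h5 : (k : ℝ) * Real.log (Real.log n) ≤ 1 / 10 * Real.log n := by
      calc (k : ℝ) * Real.log (Real.log n) ≤ k * (1 / (10 * k) * Real.log n) := by gcongr
        _ = _ := by field_simp
    nlinarith [Real.log_nonneg h2]
  have hexp : ∀ᶠ n : ℕ in atTop, Real.exp (1 * Real.log n) = n := by
    filter_upwards [eventually_ge_atTop 1] with n hn
    rw [one_mul, Real.exp_log (by positivity)]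
  have hqlim : Tendsto q atTop (nhds 0) := by
    have h := (tendsto_log_pow_div_exp 1 one_pos).const_mul (11 / 10)
    rw [mul_zero] at h
    refine squeeze_zero' (.of_forall hq0) ?_ h
    filter_upwards [hexp, hnq_le, eventually_ge_atTop 1] with n h1 h2 h3
    have : (0 : ℝ) < n := by positivity
    rw [h1, pow_one, ← mul_div_assoc, le_div_iff₀ this]
    linarith
  have hnq2 : Tendsto (fun n => n * q n ^ 2) atTop (nhds 0) := by
    have h := (tendsto_log_pow_div_exp 2 one_pos).const_mul ((11 / 10) ^ 2)
    rw [mul_zero] at h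
    refine squeeze_zero' (.of_forall fun n => by positivity) ?_ h
    filter_upwards [hexp, hnq_le, eventually_ge_atTop 1] with n h1 h2 h3
    have hn : (0 : ℝ) < n := by positivity
    have h4 := mul_nonneg hn.le (hq0 n)
    rw [h1, ← mul_div_assoc, le_div_iff₀ hn]
    calc n * q n ^ 2 * n = (n * q n) ^ 2 := by ring
      _ ≤ (11 / 10 * Real.log n) ^ 2 := by gcongr
      _ = _ := by ring
  let c : ℕ → ℝ := fun n => (K n : ℝ) ^ 2 / P n * Real.exp 1 +
    121 / 100 * (Real.log n ^ 2 / Real.exp (33 / 100 * Real.log n))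
  have hc : Tendsto c atTop (nhds 0) := by
    have := (hKsq.mul_const (Real.exp 1)).add
      ((tendsto_log_pow_div_exp 2 (by norm_num : (0 : ℝ) < 33 / 100)).const_mul (121 / 100))
    simpa only [zero_mul, mul_zero, add_zero] using this
  let d : ℝ := tailConst k * (Real.exp (-1) * (1 / 2) ^ (k - 1))
  have hd : 0 < d := by
    have := tailConst_pos k
    positivity
  let M : ℕ → ℝ := fun n => min (Real.exp (Real.log n / 2)) (Real.exp (-α n))
  have hM : Tendsto M atTop atTop := by
    refine tendsto_atTop_mono' atTop (f₁ := fun n : ℕ => Real.exp (min (Real.log n / 2) (-α n)))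
      (.of_forall fun n => (Real.exp_monotone.map_min).le) ?_
    refine Real.tendsto_exp_atTop.comp ?_
    refine tendsto_atTop.2 fun b => ?_
    filter_upwards [(tendsto_log_natCast_atTop.atTop_div_const two_pos).eventually_ge_atTop b,
      (tendsto_neg_atBot_atTop.comp hαbot).eventually_ge_atTop b] with n h1 h2
    exact le_min h1 h2
  have hbound : Tendsto (fun n => 1 / (d * M n) + ((((1 - q n)⁻¹) ^ (k + 1)) ^ 2 - 1) +
      unionConst k * (Real.exp 1 * c n + c n ^ 2)) atTop (nhds 0) := by
    have h1 : Tendsto (fun n => 1 / (d * M n)) atTop (nhds 0) :=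
      (tendsto_const_nhds).div_atTop (hM.const_mul_atTop hd)
    have h2 : Tendsto (fun n => (((1 - q n)⁻¹) ^ (k + 1)) ^ 2 - 1) atTop (nhds 0) := by
      have := (((((tendsto_const_nhds (x := (1 : ℝ))).sub hqlim).inv₀ (by norm_num)).pow
        (k + 1)).pow 2).sub_const 1
      simpa using this
    have h3 : Tendsto (fun n => unionConst k * (Real.exp 1 * c n + c n ^ 2)) atTop (nhds 0) := by
      have := ((hc.const_mul (Real.exp 1)).add (hc.pow 2)).const_mul (unionConst k)
      simpa using this
    simpa using (h1.add h2).add h3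
  refine squeeze_zero' (.of_forall fun n => measureReal_nonneg) ?_ hbound
  filter_upwards [hK2, hnq, hlog1, hnq_le,
    hqlim.eventually_le_const (by norm_num : (0 : ℝ) < 1 / 40),
    hnq2.eventually_le_const (by norm_num : (0 : ℝ) < 1 / 2),
    hKsq.eventually_le_const (by norm_num : (0 : ℝ) < 1 / 10), eventually_ge_atTop (2 * k + 2)]
    with n h2K hnqn hl hle hq40 hq2 hs hn
  refine (gonMeasure_real_forall_le_gDeg_le (hKP n) (hp0 n).le (hp1 n).le hk hn hq40).trans ?_
  have hlow := le_mul_binSum hk (by omega) (hq0 n) (hq40.trans (by norm_num)) (by linarith) hq2 hnqn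
  have hcor := keyRing_correction_le h2K (hKP n) (hp0 n) (hp1 n).le (by omega) hs (by linarith)
    hle hq2 (c := c n) rfl
  have hMn : 0 < M n := lt_min (Real.exp_pos _) (Real.exp_pos _)
  have hu := unionConst_nonneg k
  gcongr

/-- zero-law for `k`-connectivity and minimum degree in `𝔾_on`. -/
theorem gon_zero_law
    (k : ℕ) (hk : 1 ≤ k) (K P : ℕ → ℕ) (p : ℕ → ℝ)
    (hKP : ∀ n, K n ≤ P n) (hp0 : ∀ n, 0 < p n) (hp1 : ∀ n, p n < 1)
    (hK2 : ∀ᶠ n : ℕ in atTop, 2 ≤ K n)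
    (hKsq : Tendsto (fun n : ℕ => ((K n : ℝ)) ^ 2 / (P n : ℝ)) atTop (nhds 0))
    (α : ℕ → ℝ)
    (hα : ∀ n, 1 ≤ n → pef (K n) (P n) (p n) =
      (Real.log n + ((k : ℝ) - 1) * Real.log (Real.log n) + α n) / (n : ℝ))
    (hdeg : (∃ ε : ℝ, 0 < ε ∧ ∀ᶠ n : ℕ in atTop, ε < (n : ℝ) * pef (K n) (P n) (p n)) ∨
      Tendsto (fun n : ℕ => (n : ℝ) * pef (K n) (P n) (p n)) atTop (nhds 0))
    (hαbot : Tendsto α atTop atBot) :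
    Tendsto (fun n : ℕ => gonMeasure n (K n) (P n) (p n)
        {ω | KConnected (gonGraph ω) k}) atTop (nhds 0) ∧
    Tendsto (fun n : ℕ => gonMeasure n (K n) (P n) (p n)
        {ω | k ≤ minDeg (gonGraph ω)}) atTop (nhds 0) := by
  have hprob := fun n => isProbabilityMeasure_gonMeasure (n := n) (hKP n) (hp0 n).le (hp1 n).le
  have hreal := tendsto_gonMeasure_real_forall_le_gDeg k hk K P p hKP hp0 hp1 hK2 hKsq α hα hαbot
  have hmain : Tendsto (fun n : ℕ => gonMeasure n (K n) (P n) (p n)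
      {ω | ∀ v, k ≤ gDeg (gonGraph ω) v}) atTop (nhds 0) := by
    rw [← ENNReal.tendsto_toReal_iff (fun n => measure_ne_top _ _) ENNReal.zero_ne_top]
    simpa [Measure.real] using hreal
  constructor
  · refine tendsto_of_tendsto_of_tendsto_of_le_of_le' tendsto_const_nhds hmain
      (.of_forall fun _ => zero_le) ?_
    filter_upwards [eventually_ge_atTop (k + 1)] with n hn
    exact measure_mono fun ω hω v => KConnected.le_gDeg hk hn hω v
  · refine hmain.congr' ?_
    filter_upwards [eventually_gt_atTop 0] with n hn
    simp only [le_minDeg_iff hn]
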